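/- (Net force identity for CLE dislocation fields.) Let d = 2, V ∈ C³(ℝ^{N×ℛ}) with the point symmetry, C_{σρ} := ∂²V/∂g_σ∂g_ρ(0). Let x̂ ∈ ℝ², Γ := {x ∈ ℝ² : x₂ = x̂₂, x₁ ≥ x̂₁} with Γ ∩ Λ = ∅, b ∈ ℝ^N, and let u ∈ C³(ℝ²∖Γ; ℝ^N) be such that ∇u extends to a C² field on ℝ²∖{x̂}, the one-sided limits across Γ∖{x̂} satisfy u(x+) − u(x−) = −b and ∇_{e₂}u(x+) = ∇_{e₂}u(x−), −div(ℂ[∇u]) = 0 on ℝ²∖{x̂}, and |∇^j u(x)| ≤ c|x−x̂|^{−j} for j = 1,2,3 and all x ≠ x̂. Assume in addition that the lattice finite differences satisfy |D_ρ u(ℓ)| ≤ c(1+|ℓ−x̂|)^{−1} for all ℓ ∈ Λ and ρ ∈ ℛ. Then for every smooth cutoff η : ℝ² → [0,1] with η = 1 on B₁(0) and η = 0 outside B₂(0), the limits lim_{R→∞} ∑_{ℓ∈Λ} η(ℓ/R) δE(u)(ℓ) and lim_{R→∞} ∑_{ℓ∈Λ} η(ℓ/R) H[u](ℓ) exist,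 are independent of η, and both equal −∫_{∂B₁(x̂)} ℂ[∇u]ν dσ. -/

import Mathlib

noncomputable section

open scoped BigOperators
open MeasureTheory Filter Topology

namespace Defect

abbrev Vec (n : ℕ) : Type := Fin n → ℝ

/-- Euclidean norm of a vector in `ℝ^n`. -/
def enorm {n : ℕ} (v : Vec n) : ℝ := Real.sqrt (∑ i, (v i) ^ 2)

/-- `⟨x⟩ := |x| + 2`. -/
def ang {n : ℕ} (v : Vec n) : ℝ := enorm v + 2

def dotV {n : ℕ} (x y : Vec n) : ℝ := ∑ i, x i * y i

/-- Matrix-vector product for a plain `Fin N → Fin N → ℝ` matrix. -/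
def mulV {N : ℕ} (M : Fin N → Fin N → ℝ) (v : Vec N) : Vec N := fun i => ∑ j, M i j * v j

/-- Euclidean (Frobenius) norm of an `N × N` array. -/
def mnorm {N : ℕ} (M : Fin N → Fin N → ℝ) : ℝ := Real.sqrt (∑ i, ∑ j, (M i j) ^ 2)

/-- The lattice point `A z` for `z ∈ ℤ^d`. -/
def latticePt (d : ℕ) (A : Matrix (Fin d) (Fin d) ℝ) (z : Fin d → ℤ) : Vec d :=
  fun i => ∑ j, A i j * (z j : ℝ)

/-- The Bravais lattice `Λ = A ℤ^d`. -/
def Lattice (d : ℕ) (A : Matrix (Fin d) (Fin d) ℝ) : Set (Vec d) :=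
  Set.range (latticePt d A)

/-- First-order finite difference `D_ρ u (ℓ) = u(ℓ+ρ) - u(ℓ)`. -/
def D1 {d : ℕ} {M : Type} [AddCommGroup M] (ρ : Vec d) (u : Vec d → M) (ℓ : Vec d) : M :=
  u (ℓ + ρ) - u ℓ

/-- Iterated finite difference `D_{ρ₁} ⋯ D_{ρ_j} u (ℓ)` (closed form). -/
def Dmulti {d : ℕ} {M : Type} [AddCommGroup M] [Module ℝ M] {j : ℕ}
    (ρs : Fin j → Vec d) (u : Vec d → M) (ℓ : Vec d) : M :=
  ∑ S : Finset (Fin j), ((-1 : ℝ) ^ (j - S.card)) • u (ℓ + ∑ i ∈ S, ρs i)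

/-- `|Du(ℓ)|²`, the squared Euclidean norm of the stencil of first differences. -/
def Dnorm1Sq {d N : ℕ} (R : Finset (Vec d)) (u : Vec d → Vec N) (ℓ : Vec d) : ℝ :=
  ∑ ρ ∈ R, (enorm (D1 ρ u ℓ)) ^ 2

/-- `|D^j u(ℓ)|`, the Euclidean norm of the array `(D_{ρ⃗} u(ℓ))_{ρ⃗ ∈ R^j}`. -/
def DnormJ {d N : ℕ} (R : Finset (Vec d)) (j : ℕ) (u : Vec d → Vec N) (ℓ : Vec d) : ℝ :=
  Real.sqrt (∑ ρs : Fin j → {x // x ∈ R},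
    (enorm (Dmulti (fun i => (ρs i : Vec d)) u ℓ)) ^ 2)

/-- The linearized lattice operator
`H[u](ℓ) = ∑_{σ,ρ∈R} (C_{σρ} D_ρ u(ℓ-σ) - C_{σρ} D_ρ u(ℓ))`. -/
def Hop (d N : ℕ) (R : Finset (Vec d)) (C : Vec d → Vec d → Fin N → Fin N → ℝ)
    (u : Vec d → Vec N) (ℓ : Vec d) : Vec N :=
  ∑ σ ∈ R, ∑ ρ ∈ R, (mulV (C σ ρ) (D1 ρ u (ℓ - σ)) - mulV (C σ ρ) (D1 ρ u ℓ))

/-- `u ∈ 𝓗¹`. -/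
def InH1 {d N : ℕ} (A : Matrix (Fin d) (Fin d) ℝ) (R : Finset (Vec d))
    (u : Vec d → Vec N) : Prop :=
  Summable fun z : Fin d → ℤ => Dnorm1Sq R u (latticePt d A z)

/-- `u ∈ 𝓗ᶜ` : the stencil `Du` has bounded support on the lattice. -/
def InHc {d N : ℕ} (A : Matrix (Fin d) (Fin d) ℝ) (R : Finset (Vec d))
    (u : Vec d → Vec N) : Prop :=
  ∃ rad : ℝ, ∀ z : Fin d → ℤ, rad ≤ enorm (latticePt d A z) →
    ∀ ρ ∈ R, D1 ρ u (latticePt d A z) = 0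

/-- Stability of the lattice operator `H`. -/
def IsStable (d N : ℕ) (A : Matrix (Fin d) (Fin d) ℝ) (R : Finset (Vec d))
    (C : Vec d → Vec d → Fin N → Fin N → ℝ) : Prop :=
  ∃ c₀ : ℝ, 0 < c₀ ∧ ∀ u : Vec d → Vec N, InHc A R u →
    c₀ * (∑' z : Fin d → ℤ, Dnorm1Sq R u (latticePt d A z)) ≤
      ∑' z : Fin d → ℤ, ∑ σ ∈ R, ∑ ρ ∈ R,
        dotV (D1 σ u (latticePt d A z)) (mulV (C σ ρ) (D1 ρ u (latticePt d A z)))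

/-- `k`-th column of a matrix-valued function. -/
def col {d N : ℕ} (G : Vec d → Fin N → Fin N → ℝ) (k : Fin N) : Vec d → Vec N :=
  fun x i => G x i k

/-- `|D^j 𝒢(ℓ)|` for matrix-valued `𝒢`. -/
def DnormJmat {d N : ℕ} (R : Finset (Vec d)) (j : ℕ)
    (G : Vec d → Fin N → Fin N → ℝ) (ℓ : Vec d) : ℝ :=
  Real.sqrt (∑ k : Fin N, (DnormJ R j (col G k) ℓ) ^ 2)

/-- `𝒢` is a lattice Green's function for `H`. -/
def IsLatticeGreen (d N : ℕ) (A : Matrix (Fin d) (Fin d) ℝ) (R : Finset (Vec d))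
    (C : Vec d → Vec d → Fin N → Fin N → ℝ) (G : Vec d → Fin N → Fin N → ℝ) : Prop :=
  (∀ (k : Fin N) (z : Fin d → ℤ),
      Hop d N R C (col G k) (latticePt d A z) =
        if latticePt d A z = 0 then Pi.single k 1 else 0) ∧
  (∀ j : ℕ, 1 ≤ j → ∃ cj : ℝ, ∀ z : Fin d → ℤ,
      DnormJmat R j G (latticePt d A z) ≤
        cj * ang (latticePt d A z) ^ ((2 : ℝ) - d - j))

/-- A symmetric array `b ∈ (ℝ^{Fin d})^{⊙ i}`. -/
def SymArr {d i : ℕ} (b : (Fin i → Fin d) → ℝ) : Prop :=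
  ∀ (π : Equiv.Perm (Fin i)) (σv : Fin i → Fin d), b (σv ∘ π) = b σv

/-- `b : D_𝒮^i f`, a multipole term built from the basis `s`. -/
def multipole (d N : ℕ) (s : Fin d → Vec d) (i : ℕ) (b : (Fin i → Fin d) → ℝ)
    (f : Vec d → Vec N) : Vec d → Vec N :=
  fun ℓ => ∑ σv : Fin i → Fin d, b σv • Dmulti (fun m => s (σv m)) f ℓ

/-- Iterated partial derivative `∂_{j₁} ⋯ ∂_{j_i} f (x)`. -/
def pderivMulti {d : ℕ} (i : ℕ) (js : Fin i → Fin d) (f : Vec d → ℝ) (x : Vec d) : ℝ :=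
  iteratedFDeriv ℝ i f x (fun m => Pi.single (js m) (1 : ℝ))

/-- `a : ∇^i f (x)` for a tensor `a ∈ (ℝ^d)^{⊗ i}`. -/
def aContract {d : ℕ} (i : ℕ) (a : (Fin i → Fin d) → ℝ) (f : Vec d → ℝ) (x : Vec d) : ℝ :=
  ∑ js : Fin i → Fin d, a js * pderivMulti i js f x

/-- Elementary tensor `σ⃗^⊗` as an array. -/
def tensorPow {d k : ℕ} (σs : Fin k → Vec d) : (Fin k → Fin d) → ℝ :=
  fun js => ∏ m, σs m (js m)

/-- Symmetric tensor product `σ⃗^⊙`. -/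
def symTensor {d k : ℕ} (σs : Fin k → Vec d) : (Fin k → Fin d) → ℝ :=
  fun js => ((k.factorial : ℝ))⁻¹ * ∑ π : Equiv.Perm (Fin k), tensorPow (σs ∘ π) js

/-- A symmetric tensor (array invariant under index permutations). -/
def SymTensor {d k : ℕ} (T : (Fin k → Fin d) → ℝ) : Prop :=
  ∀ (π : Equiv.Perm (Fin k)) (js : Fin k → Fin d), T (js ∘ π) = T js

/-- `∂V/∂g_ρ (gs)` as a vector in `ℝ^N`. -/
def gradV {d N : ℕ} (R : Finset (Vec d)) (V : ({x // x ∈ R} → Vec N) → ℝ)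
    (ρ : {x // x ∈ R}) (gs : {x // x ∈ R} → Vec N) : Vec N :=
  fun i => fderiv ℝ V gs (Pi.single ρ (Pi.single i 1))

/-- The finite-difference stencil `Du(ℓ) = (D_ρ u(ℓ))_{ρ ∈ R}`. -/
def Dstencil {d N : ℕ} (R : Finset (Vec d)) (u : Vec d → Vec N) (ℓ : Vec d) :
    {x // x ∈ R} → Vec N :=
  fun ρ => D1 (ρ : Vec d) u ℓ

/-- `C_{σρ} = ∂²V/∂g_σ ∂g_ρ (0)`. -/
def CofV {d N : ℕ} (R : Finset (Vec d)) (V : ({x // x ∈ R} → Vec N) → ℝ)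
    (σ ρ : Vec d) (i j : Fin N) : ℝ :=
  if hσ : σ ∈ R then
    if hρ : ρ ∈ R then
      iteratedFDeriv ℝ 2 V 0
        ![Pi.single ⟨σ, hσ⟩ (Pi.single i 1), Pi.single ⟨ρ, hρ⟩ (Pi.single j 1)]
    else 0
  else 0

/-- Summand of the first variation `δE(u)[v]` at a site. -/
def deltaEsite {d N : ℕ} (R : Finset (Vec d)) (V : ({x // x ∈ R} → Vec N) → ℝ)
    (u v : Vec d → Vec N) (ℓ : Vec d) : ℝ :=
  ∑ ρ ∈ R.attach, dotV (gradV R V ρ (Dstencil R u ℓ)) (D1 (ρ : Vec d) v ℓ)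

/-- The pointwise atomistic force `δE(u)(ℓ)`. -/
def deltaEpt {d N : ℕ} (R : Finset (Vec d)) (V : ({x // x ∈ R} → Vec N) → ℝ)
    (u : Vec d → Vec N) (ℓ : Vec d) : Vec N :=
  ∑ ρ ∈ R.attach,
    (gradV R V ρ (Dstencil R u (ℓ - (ρ : Vec d))) - gradV R V ρ (Dstencil R u ℓ))

/-- Point symmetry of the site potential. -/
def PointSym {d N : ℕ} (R : Finset (Vec d)) (hRsym : ∀ ρ ∈ R, -ρ ∈ R)
    (V : ({x // x ∈ R} → Vec N) → ℝ) : Prop :=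
  ∀ gs : {x // x ∈ R} → Vec N,
    V (fun ρ => -(gs ⟨-(ρ : Vec d), hRsym _ ρ.2⟩)) = V gs

/-- The Cauchy–Born elasticity tensor `ℂ_{iajb}`. -/
def CB {d N : ℕ} (A : Matrix (Fin d) (Fin d) ℝ) (R : Finset (Vec d))
    (C : Vec d → Vec d → Fin N → Fin N → ℝ)
    (i : Fin N) (a : Fin d) (j : Fin N) (b : Fin d) : ℝ :=
  (|A.det|)⁻¹ * ∑ ρ ∈ R, ∑ σ ∈ R, C ρ σ i j * ρ a * σ b

/-- Polar parametrization. -/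
def polX (xh : Vec 2) (p : ℝ × ℝ) : Vec 2 := xh + ![p.1 * Real.cos p.2, p.1 * Real.sin p.2]

lemma polX_r (xh : Vec 2) (r θ : ℝ) :
    HasDerivAt (fun t => polX xh (t, θ)) ![Real.cos θ, Real.sin θ] r := by
  unfold polX
  refine HasDerivAt.const_add _ ?_
  rw [hasDerivAt_pi]
  intro i
  fin_cases i
  · simpa using (hasDerivAt_id r).mul_const (Real.cos θ)
  · simpa using (hasDerivAt_id r).mul_const (Real.sin θ)

lemma polX_θ (xh : Vec 2) (r θ : ℝ) :
    HasDerivAt (fun t => polX xh (r, t)) ![- (r * Real.sin θ), r * Real.cos θ] θ := by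
  unfold polX
  refine HasDerivAt.const_add _ ?_
  rw [hasDerivAt_pi]
  intro i
  fin_cases i
  · simpa using (Real.hasDerivAt_cos θ).const_mul r
  · simpa using (Real.hasDerivAt_sin θ).const_mul r

lemma polX_diff (xh : Vec 2) : Differentiable ℝ (polX xh) := by
  unfold polX
  refine (differentiable_const xh).add ?_
  rw [differentiable_pi]
  intro i
  fin_cases i
  · simp; fun_prop
  · simp; fun_prop

lemma polX_ne (xh : Vec 2) {p : ℝ × ℝ} (hp : 0 < p.1) : polX xh p ≠ xh := by
  intro h
  unfold polX at h
  have h' : (![p.1 * Real.cos p.2, p.1 * Real.sin p.2] : Vec 2) = 0 := left_eq_add.mp h.symm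
  have h0 := congrFun h' 0
  have h1 := congrFun h' 1
  simp [hp.ne'] at h0 h1
  nlinarith [Real.sin_sq_add_cos_sq p.2]

lemma vec2_eq (a b : ℝ) : (![a, b] : Vec 2) = a • Pi.single 0 1 + b • Pi.single 1 1 := by
  ext i; fin_cases i <;> simp

lemma polar_calc (xh : Vec 2) (P Q φ : Vec 2 → ℝ) 
    (hP : ∀ x, x ≠ xh → DifferentiableAt ℝ P x) (hQ : ∀ x, x ≠ xh → DifferentiableAt ℝ Q x)
    (hdiv : ∀ x, x ≠ xh → fderiv ℝ P x (Pi.single 0 1) + fderiv ℝ Q x (Pi.single 1 1) = 0)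
    (hφ : Differentiable ℝ φ) (p : ℝ × ℝ) (hp : 0 < p.1) :
    DifferentiableAt ℝ (fun p : ℝ × ℝ => φ (polX xh p) * (p.1 * (P (polX xh p) * Real.cos p.2
      + Q (polX xh p) * Real.sin p.2))) p ∧
    DifferentiableAt ℝ (fun p : ℝ × ℝ => φ (polX xh p) * (-P (polX xh p) * Real.sin p.2
      + Q (polX xh p) * Real.cos p.2)) p ∧
    fderiv ℝ (fun p : ℝ × ℝ => φ (polX xh p) * (p.1 * (P (polX xh p) * Real.cos p.2
      + Q (polX xh p) * Real.sin p.2))) p (1, 0) +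
    fderiv ℝ (fun p : ℝ × ℝ => φ (polX xh p) * (-P (polX xh p) * Real.sin p.2
      + Q (polX xh p) * Real.cos p.2)) p (0, 1) =
    p.1 * (P (polX xh p) * fderiv ℝ φ (polX xh p) (Pi.single 0 1)
      + Q (polX xh p) * fderiv ℝ φ (polX xh p) (Pi.single 1 1)) := by
  have hne := polX_ne xh hp
  have dX := polX_diff xh p
  have dP : DifferentiableAt ℝ (fun p => P (polX xh p)) p := (hP _ hne).comp p dX
  have dQ : DifferentiableAt ℝ (fun p => Q (polX xh p)) p := (hQ _ hne).comp p dX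
  have dφ : DifferentiableAt ℝ (fun p => φ (polX xh p)) p := (hφ _).comp p dX
  have d1 : DifferentiableAt ℝ (fun p : ℝ × ℝ => φ (polX xh p) * (p.1 * (P (polX xh p) * Real.cos p.2
      + Q (polX xh p) * Real.sin p.2))) p := by fun_prop
  have d2 : DifferentiableAt ℝ (fun p : ℝ × ℝ => φ (polX xh p) * (-P (polX xh p) * Real.sin p.2
      + Q (polX xh p) * Real.cos p.2)) p := by fun_prop
  refine ⟨d1, d2, ?_⟩
  obtain ⟨r, θ⟩ := p
  have l1 : HasDerivAt (fun t : ℝ => ((t, θ) : ℝ × ℝ)) (1, 0) r :=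
    (hasDerivAt_id r).prodMk (hasDerivAt_const r θ)
  have l2 : HasDerivAt (fun t : ℝ => ((r, t) : ℝ × ℝ)) (0, 1) θ :=
    (hasDerivAt_const θ r).prodMk (hasDerivAt_id θ)
  have e1 := d1.hasFDerivAt.comp_hasDerivAt r l1
  have e2 := d2.hasFDerivAt.comp_hasDerivAt θ l2
  have hr : ∀ G : Vec 2 → ℝ, DifferentiableAt ℝ G (polX xh (r, θ)) →
      HasDerivAt (fun t => G (polX xh (t, θ))) (fderiv ℝ G (polX xh (r, θ)) ![Real.cos θ, Real.sin θ]) r :=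
    fun G hG => hG.hasFDerivAt.comp_hasDerivAt r (polX_r xh r θ)
  have ht : ∀ G : Vec 2 → ℝ, DifferentiableAt ℝ G (polX xh (r, θ)) →
      HasDerivAt (fun t => G (polX xh (r, t)))
        (fderiv ℝ G (polX xh (r, θ)) ![- (r * Real.sin θ), r * Real.cos θ]) θ :=
    fun G hG => hG.hasFDerivAt.comp_hasDerivAt θ (polX_θ xh r θ)
  have f1 := (hr φ (hφ _)).mul ((hasDerivAt_id r).mul (((hr P (hP _ hne)).mul_const (Real.cos θ)).add
     ((hr Q (hQ _ hne)).mul_const (Real.sin θ))))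
  have f2 := (ht φ (hφ _)).mul (((ht P (hP _ hne)).neg.mul (Real.hasDerivAt_sin θ)).add
     ((ht Q (hQ _ hne)).mul (Real.hasDerivAt_cos θ)))
  have g1 := e1.unique f1
  have g2 := e2.unique f2
  rw [g1, g2]
  simp only [vec2_eq, map_add, map_smul, smul_eq_mul, Pi.mul_apply, Pi.add_apply, Pi.neg_apply, id]
  have hd := hdiv _ hne
  have hQ1 : fderiv ℝ Q (polX xh (r, θ)) (Pi.single 1 1) = - fderiv ℝ P (polX xh (r, θ)) (Pi.single 0 1) := by
    linarith
  rw [hQ1]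
  have hc : Real.sin θ ^ 2 = 1 - Real.cos θ ^ 2 := by linarith [Real.sin_sq_add_cos_sq θ]
  ring_nf
  rw [hc]
  ring

lemma div_polar (xh : Vec 2) (P Q φ : Vec 2 → ℝ)
    (hP : ContDiffOn ℝ 1 P {x | x ≠ xh}) (hQ : ContDiffOn ℝ 1 Q {x | x ≠ xh})
    (hdiv : ∀ x, x ≠ xh → fderiv ℝ P x (Pi.single 0 1) + fderiv ℝ Q x (Pi.single 1 1) = 0)
    (hφ : ContDiff ℝ 1 φ) (h1 : ∀ x, ‖x - xh‖ < 3 → φ x = 1)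
    (M : ℝ) (hM : 1 ≤ M) (h0 : ∀ x, M < 2 * ‖x - xh‖ → φ x = 0) :
    ∫ x, (P x * fderiv ℝ φ x (Pi.single 0 1) + Q x * fderiv ℝ φ x (Pi.single 1 1)) =
      - ∫ θ in (0:ℝ)..(2 * Real.pi), (P (xh + ![Real.cos θ, Real.sin θ]) * Real.cos θ +
        Q (xh + ![Real.cos θ, Real.sin θ]) * Real.sin θ) := by
  have hopen : IsOpen {x : Vec 2 | x ≠ xh} := isOpen_ne
  have dP : ∀ x, x ≠ xh → DifferentiableAt ℝ P x := fun x hx =>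
    (hP.differentiableOn one_ne_zero).differentiableAt (hopen.mem_nhds hx)
  have dQ : ∀ x, x ≠ xh → DifferentiableAt ℝ Q x := fun x hx =>
    (hQ.differentiableOn one_ne_zero).differentiableAt (hopen.mem_nhds hx)
  have dφ : Differentiable ℝ φ := hφ.differentiable one_ne_zero
  set E : Vec 2 → ℝ := fun x => P x * fderiv ℝ φ x (Pi.single 0 1) + Q x * fderiv ℝ φ x (Pi.single 1 1)
    with hE
  have normX : ∀ p : ℝ × ℝ, 0 ≤ p.1 → ‖polX xh p - xh‖ ≤ p.1 ∧ p.1 ≤ 2 * ‖polX xh p - xh‖ := by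
    intro p hp
    have e : polX xh p - xh = ![p.1 * Real.cos p.2, p.1 * Real.sin p.2] := by simp [polX]
    rw [e]
    constructor
    · rw [pi_norm_le_iff_of_nonneg hp]
      intro i; fin_cases i
      · simp [abs_mul, abs_of_nonneg hp]; exact mul_le_of_le_one_right hp (Real.abs_cos_le_one _)
      · simp [abs_mul, abs_of_nonneg hp]; exact mul_le_of_le_one_right hp (Real.abs_sin_le_one _)
    · have a0 := norm_le_pi_norm (![p.1 * Real.cos p.2, p.1 * Real.sin p.2] : Vec 2) 0
      have a1 := norm_le_pi_norm (![p.1 * Real.cos p.2, p.1 * Real.sin p.2] : Vec 2) 1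
      simp [abs_mul, abs_of_nonneg hp] at a0 a1
      have hs : 1 ≤ |Real.cos p.2| + |Real.sin p.2| := by
        nlinarith [Real.sin_sq_add_cos_sq p.2, sq_abs (Real.cos p.2), sq_abs (Real.sin p.2),
          abs_nonneg (Real.cos p.2), abs_nonneg (Real.sin p.2), Real.abs_cos_le_one p.2, Real.abs_sin_le_one p.2]
      nlinarith
  -- vanishing of E
  have E1 : ∀ x, ‖x - xh‖ < 3 → E x = 0 := by
    intro x hx
    have : φ =ᶠ[𝓝 x] fun _ => 1 := by
      have : {y : Vec 2 | ‖y - xh‖ < 3} ∈ 𝓝 x :=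
        (isOpen_lt (by fun_prop) continuous_const).mem_nhds hx
      filter_upwards [this] with y hy using h1 y hy
    simp [hE, this.fderiv_eq]
  have E0 : ∀ x, M < 2 * ‖x - xh‖ → E x = 0 := by
    intro x hx
    have : φ =ᶠ[𝓝 x] fun _ => 0 := by
      have : {y : Vec 2 | M < 2 * ‖y - xh‖} ∈ 𝓝 x :=
        (isOpen_lt continuous_const (by fun_prop)).mem_nhds hx
      filter_upwards [this] with y hy using h0 y hy
    simp [hE, this.fderiv_eq]
  -- to polar coordinates
  have s1 : ∫ x, E x = ∫ p in polarCoord.target, p.1 * E (polX xh p) := by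
    rw [← integral_add_left_eq_self E xh,
      ← ((volume_preserving_finTwoArrow ℝ).symm _).integral_comp
        (MeasurableEquiv.measurableEmbedding _), ← integral_comp_polarCoord_symm]
    rfl
  set a : ℝ × ℝ := (1, -Real.pi)
  set b : ℝ × ℝ := (M + 1, Real.pi)
  have hle : a ≤ b := ⟨by simp [a, b]; linarith, by simp [a, b]; linarith [Real.pi_pos]⟩
  have hIcc : ∀ p ∈ Set.Icc a b, 1 ≤ p.1 := fun p hp => hp.1.1
  have s2 : ∫ p in polarCoord.target, p.1 * E (polX xh p) = ∫ p in Set.Icc a b, p.1 * E (polX xh p) := by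
    have : (Set.Icc a b : Set (ℝ × ℝ)) =ᵐ[volume] Set.Icc 1 (M+1) ×ˢ Set.Ioo (-Real.pi) Real.pi := by
      have : Set.Icc a b = Set.Icc 1 (M+1) ×ˢ Set.Icc (-Real.pi) Real.pi := by
        exact Set.Icc_prod_eq a b
      rw [this]
      exact Measure.set_prod_ae_eq (Filter.EventuallyEq.refl _ _) Ioo_ae_eq_Icc.symm
    rw [setIntegral_congr_set this]
    apply setIntegral_eq_of_subset_of_forall_sdiff_eq_zero
    · exact polarCoord.open_target.measurableSet
    · rintro ⟨r, t⟩ ⟨hr, ht⟩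
      exact ⟨lt_of_lt_of_le one_pos hr.1, ht⟩
    · rintro ⟨r, t⟩ ⟨⟨hr, ht⟩, h2⟩
      simp only [Set.mem_prod, Set.mem_Icc, not_and_or, Set.mem_Ioi] at h2 hr ht
      have hn := normX (r, t) hr.le
      simp only at hn
      rcases h2 with (h2 | h2) | h2
      · rw [E1 _ (by linarith), mul_zero]
      · rw [E0 _ (by linarith), mul_zero]
      · exact absurd ht h2
  have calc' := fun p hp => polar_calc xh P Q φ dP dQ hdiv dφ p hp
  set f : ℝ × ℝ → ℝ := (fun p : ℝ × ℝ => φ (polX xh p) * (p.1 * (P (polX xh p) * Real.cos p.2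
      + Q (polX xh p) * Real.sin p.2))) with hf
  set g : ℝ × ℝ → ℝ := (fun p : ℝ × ℝ => φ (polX xh p) * (-P (polX xh p) * Real.sin p.2
      + Q (polX xh p) * Real.cos p.2)) with hg
  have s3 : ∫ p in Set.Icc a b, p.1 * E (polX xh p) =
      ∫ p in Set.Icc a b, fderiv ℝ f p (1, 0) + fderiv ℝ g p (0, 1) := by
    refine setIntegral_congr_fun measurableSet_Icc ?_
    intro p hp
    exact (calc' p (by linarith [hIcc p hp])).2.2.symm
  have s4 := integral_divergence_prod_Icc_of_hasFDerivAt_of_le f g (fderiv ℝ f) (fderiv ℝ g) a b hle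
    (fun p hp => (calc' p (by linarith [hIcc p hp])).1.continuousAt.continuousWithinAt)
    (fun p hp => (calc' p (by linarith [hIcc p hp])).2.1.continuousAt.continuousWithinAt)
    (fun p hp => (calc' p (by have : (1:ℝ) < p.1 := hp.1.1
                              linarith)).1.hasFDerivAt)
    (fun p hp => (calc' p (by have : (1:ℝ) < p.1 := hp.1.1
                              linarith)).2.1.hasFDerivAt)
    (by
      have cont : ContinuousOn (fun p : ℝ × ℝ => p.1 * E (polX xh p)) (Set.Icc a b) := by
        have cX : ContinuousOn (polX xh) (Set.Icc a b) := (polX_diff xh).continuous.continuousOn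
        have mX : Set.MapsTo (polX xh) (Set.Icc a b) {x | x ≠ xh} := fun p hp =>
          polX_ne xh (by linarith [hIcc p hp])
        have cE : ContinuousOn E {x | x ≠ xh} := by
          have cφ : Continuous (fderiv ℝ φ) := hφ.continuous_fderiv one_ne_zero
          have := hP.continuousOn
          have := hQ.continuousOn
          fun_prop
        exact continuous_fst.continuousOn.mul (cE.comp cX mX)
      refine (cont.integrableOn_compact isCompact_Icc).congr_fun ?_ measurableSet_Icc
      intro p hp
      exact (calc' p (by linarith [hIcc p hp])).2.2.symm)
  rw [s1, s2, s3, s4]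
  have t1 : (∫ x in a.1..b.1, g (x, b.2)) = ∫ x in a.1..b.1, g (x, a.2) := by
    have : ∀ x, g (x, b.2) = g (x, a.2) := by intro x; simp [g, a, b, polX]
    simp_rw [this]
  have t2 : (∫ y in a.2..b.2, f (b.1, y)) = 0 := by
    have : ∀ y, f (b.1, y) = 0 := by
      intro y
      have hn := normX (M + 1, y) (by simp; linarith)
      simp only at hn
      simp only [f, b]
      rw [h0 _ (by linarith), zero_mul]
    simp [this]
  rw [t1, t2, sub_self, zero_add, zero_sub]
  congr 1
  have t3 : ∀ y, f (a.1, y) = (P (xh + ![Real.cos y, Real.sin y]) * Real.cos y +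
        Q (xh + ![Real.cos y, Real.sin y]) * Real.sin y) := by
    intro y
    have hn := normX (1, y) (by simp)
    simp only at hn
    simp only [f, a]
    rw [h1 _ (by linarith)]
    simp [polX]
  simp_rw [t3]
  have per : Function.Periodic (fun y => (P (xh + ![Real.cos y, Real.sin y]) * Real.cos y +
        Q (xh + ![Real.cos y, Real.sin y]) * Real.sin y)) (2 * Real.pi) := by
    intro y; simp
  have := per.intervalIntegral_add_eq (-Real.pi) 0
  rw [zero_add] at this
  rw [← this]
  congr 1
  simp [b]; ring

lemma norm_le_enorm' {n : ℕ} (v : Vec n) : ‖v‖ ≤ enorm v := by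
  unfold enorm
  rw [pi_norm_le_iff_of_nonneg (Real.sqrt_nonneg _)]
  intro i
  apply Real.le_sqrt_of_sq_le
  rw [Real.norm_eq_abs, sq_abs]
  exact Finset.single_le_sum (f := fun i => v i ^ 2) (fun i _ => sq_nonneg _) (Finset.mem_univ i)

lemma enorm_le_two (v : Vec 2) : enorm v ≤ 2 * ‖v‖ := by
  unfold enorm
  apply Real.sqrt_le_iff.mpr
  refine ⟨by positivity, ?_⟩
  have a0 := norm_le_pi_norm v 0
  have a1 := norm_le_pi_norm v 1
  rw [Real.norm_eq_abs] at a0 a1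
  simp only [Fin.sum_univ_two]
  nlinarith [sq_abs (v 0), sq_abs (v 1), abs_nonneg (v 0), abs_nonneg (v 1)]

/-- cast of integer vectors -/
def zc (z : Fin 2 → ℤ) : Vec 2 := fun i => (z i : ℝ)

lemma latticePt_eq (A : Matrix (Fin 2) (Fin 2) ℝ) (z : Fin 2 → ℤ) :
    latticePt 2 A z = A.mulVec (zc z) := rfl

lemma zc_add (z y : Fin 2 → ℤ) : zc (z + y) = zc z + zc y := by
  ext i; simp [zc]

lemma latticePt_add (A : Matrix (Fin 2) (Fin 2) ℝ) (z y : Fin 2 → ℤ) :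
    latticePt 2 A (z + y) = latticePt 2 A z + latticePt 2 A y := by
  simp [latticePt_eq, zc_add, Matrix.mulVec_add]

lemma mulVec_bound (A : Matrix (Fin 2) (Fin 2) ℝ) : ∃ M : ℝ, 1 ≤ M ∧ ∀ v, ‖A.mulVec v‖ ≤ M * ‖v‖ := by
  let T := LinearMap.toContinuousLinearMap (Matrix.toLin' A)
  refine ⟨‖T‖ + 1, by linarith [norm_nonneg T], fun v => ?_⟩
  have := T.le_opNorm v
  have e : T v = A.mulVec v := rfl
  rw [e] at this
  nlinarith [norm_nonneg v]

lemma A_bounds (A : Matrix (Fin 2) (Fin 2) ℝ) (hA : IsUnit A.det) : ∃ M : ℝ, 1 ≤ M ∧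
    (∀ v, ‖A.mulVec v‖ ≤ M * ‖v‖) ∧ ∀ v, ‖v‖ ≤ M * ‖A.mulVec v‖ := by
  obtain ⟨M, hM, h⟩ := mulVec_bound A
  obtain ⟨M', hM', h'⟩ := mulVec_bound A⁻¹
  refine ⟨max M M', le_max_of_le_left hM, fun v => (h v).trans ?_, fun v => ?_⟩
  · gcongr; exact le_max_left _ _
  · have := h' (A.mulVec v)
    rw [Matrix.mulVec_mulVec, Matrix.nonsing_inv_mul _ hA, Matrix.one_mulVec] at this
    refine this.trans ?_
    gcongr; exact le_max_right _ _

/-- unit cells -/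
def cell (z : Fin 2 → ℤ) : Set (Vec 2) := Set.pi Set.univ fun i => Set.Ico (z i : ℝ) (z i + 1)

lemma cell_vol (z : Fin 2 → ℤ) : volume (cell z) = 1 := by
  simp [cell, Real.volume_pi_Ico]

lemma cell_meas (z : Fin 2 → ℤ) : MeasurableSet (cell z) :=
  MeasurableSet.univ_pi fun _ => measurableSet_Ico

lemma cell_mem (z : Fin 2 → ℤ) (y : Vec 2) : y ∈ cell z ↔ z = fun i => ⌊y i⌋ := by
  simp only [cell, Set.mem_univ_pi, Set.mem_Ico, funext_iff]
  refine forall_congr' fun i => ?_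
  rw [eq_comm, Int.floor_eq_iff]

lemma cell_union : (⋃ z, cell z) = Set.univ := by
  ext y; simp [cell_mem]

lemma cell_disj : Pairwise (Function.onFun Disjoint cell) := by
  intro z z' h
  rw [Function.onFun, Set.disjoint_left]
  intro y hy hy'
  rw [cell_mem] at hy hy'
  exact h (hy.trans hy'.symm)

lemma cell_dist (z : Fin 2 → ℤ) (y : Vec 2) (hy : y ∈ cell z) : ‖y - zc z‖ ≤ 1 := by
  rw [pi_norm_le_iff_of_nonneg zero_le_one]
  intro i
  have := hy i (Set.mem_univ i)
  simp only [Set.mem_Ico] at this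
  rw [Real.norm_eq_abs, abs_le]
  simp only [Pi.sub_apply, zc]
  constructor <;> linarith

lemma cells_sum (A : Matrix (Fin 2) (Fin 2) ℝ) (hA : IsUnit A.det) (G : Vec 2 → ℝ)
    (hG : Continuous G) (hc : HasCompactSupport G) :
    HasSum (fun z => ∫ y in cell z, G (A.mulVec y)) (|A.det|⁻¹ * ∫ x, G x) := by
  have hdet : A.det ≠ 0 := hA.ne_zero
  have hmap := Real.map_matrix_volume_pi_eq_smul_volume_pi hdet
  have cT : Continuous (Matrix.toLin' A) := (Matrix.toLin' A).continuous_of_finiteDimensional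
  have hint : Integrable G volume := hG.integrable_of_hasCompactSupport hc
  have hmeas : AEStronglyMeasurable G (Measure.map (Matrix.toLin' A) volume) :=
    hG.aestronglyMeasurable
  have key : ∫ y, G (A.mulVec y) = |A.det|⁻¹ * ∫ x, G x := by
    have := integral_map cT.measurable.aemeasurable hmeas
    rw [hmap, integral_smul_measure] at this
    rw [ENNReal.toReal_ofReal (abs_nonneg _), abs_inv, smul_eq_mul] at this
    exact this.symm
  have hi : Integrable (fun y => G (A.mulVec y)) := by
    have h2 : Integrable G (Measure.map (Matrix.toLin' A) volume) := by
      rw [hmap]; exact hint.smul_measure ENNReal.ofReal_ne_top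
    exact (integrable_map_measure hmeas cT.measurable.aemeasurable).mp h2
  have := hasSum_integral_iUnion (fun z => cell_meas z) cell_disj (f := fun y => G (A.mulVec y))
    (μ := volume) hi.integrableOn
  rw [cell_union, setIntegral_univ, key] at this
  exact this

/-- the finite box of lattice sites -/
def box (m : ℕ) : Finset (Fin 2 → ℤ) := Fintype.piFinset fun _ => Finset.Icc (-(m:ℤ)) m

lemma box_card (m : ℕ) : (box m).card = (2 * m + 1) ^ 2 := by
  simp [box, Fintype.card_piFinset]
  omega

lemma mem_box (m : ℕ) (z : Fin 2 → ℤ) (h : ‖zc z‖ ≤ m) : z ∈ box m := by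
  simp only [box, Fintype.mem_piFinset, Finset.mem_Icc]
  intro i
  have := (norm_le_pi_norm (zc z) i).trans h
  rw [Real.norm_eq_abs, abs_le] at this
  simp only [zc] at this
  exact ⟨by exact_mod_cast this.1, by exact_mod_cast this.2⟩

lemma finsupp_lat (A : Matrix (Fin 2) (Fin 2) ℝ) (hA : IsUnit A.det) (K : ℝ) 
    {X : Type*} [AddCommGroup X] (f : (Fin 2 → ℤ) → X)
    (h : ∀ z, K < ‖latticePt 2 A z‖ → f z = 0) : ∃ s : Finset (Fin 2 → ℤ), ∀ z ∉ s, f z = 0 := by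
  obtain ⟨M, hM, -, h2⟩ := A_bounds A hA
  refine ⟨box ⌈M * |K|⌉₊, fun z hz => h z ?_⟩
  by_contra hcon
  push Not at hcon
  apply hz
  apply mem_box
  refine (h2 _).trans (le_trans ?_ (Nat.le_ceil _))
  rw [← latticePt_eq]
  gcongr
  exact hcon.trans (le_abs_self K)

lemma err_sum (A : Matrix (Fin 2) (Fin 2) ℝ) (hA : IsUnit A.det) (f : ℝ → (Fin 2 → ℤ) → ℝ)
    (R₀ K : ℝ) (hf : ∀ R, R₀ ≤ R → ∀ z, |f R z| ≤ K * R⁻¹ ^ 3)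
    (h0 : ∀ R, R₀ ≤ R → ∀ z, 3 * R < ‖latticePt 2 A z‖ → f R z = 0) :
    Tendsto (fun R => ∑' z, f R z) atTop (𝓝 0) := by
  obtain ⟨M, hM, -, h2⟩ := A_bounds A hA
  have lim : Tendsto (fun R : ℝ => 81 * M ^ 2 * |K| * R⁻¹) atTop (𝓝 0) := by
    have := (tendsto_inv_atTop_zero (𝕜 := ℝ)).const_mul (81 * M ^ 2 * |K|)
    rwa [mul_zero] at this
  refine squeeze_zero_norm' ?_ lim
  filter_upwards [eventually_ge_atTop (max R₀ 1)] with R hR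
  have hR0 : R₀ ≤ R := (le_max_left _ _).trans hR
  have hR1 : 1 ≤ R := (le_max_right _ _).trans hR
  set m := ⌈3 * M * R⌉₊
  have hm : (m : ℝ) ≤ 4 * M * R := by
    have := Nat.ceil_lt_add_one (a := 3 * M * R) (by positivity)
    have : 1 ≤ M * R := one_le_mul_of_one_le_of_one_le hM hR1
    linarith
  have hz : ∀ z ∉ box m, f R z = 0 := by
    intro z hz
    apply h0 R hR0
    by_contra hcon
    push Not at hcon
    apply hz
    apply mem_box
    refine (h2 _).trans (le_trans ?_ (Nat.le_ceil _))
    rw [← latticePt_eq]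
    nlinarith
  rw [tsum_eq_sum hz]
  refine (norm_sum_le _ _).trans ?_
  have : ∀ z ∈ box m, ‖f R z‖ ≤ |K| * R⁻¹ ^ 3 := by
    intro z _
    refine (hf R hR0 z).trans ?_
    gcongr
    exact le_abs_self K
  refine (Finset.sum_le_card_nsmul _ _ _ this).trans ?_
  rw [box_card, nsmul_eq_mul]
  push_cast
  have hb : (2 * (m:ℝ) + 1) ≤ 9 * M * R := by
    have : 1 ≤ M * R := one_le_mul_of_one_le_of_one_le hM hR1
    linarith
  have hb2 : (2 * (m:ℝ) + 1) ^ 2 ≤ (9 * M * R) ^ 2 := by gcongr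
  calc (2 * (m:ℝ) + 1) ^ 2 * (|K| * R⁻¹ ^ 3) ≤ (9 * M * R) ^ 2 * (|K| * R⁻¹ ^ 3) := by gcongr
    _ = 81 * M ^ 2 * |K| * R⁻¹ := by field_simp; ring

lemma cutoff (η : Vec 2 → ℝ) (hη : ContDiff ℝ (⊤ : ℕ∞) η)
    (h1 : ∀ x : Vec 2, enorm x ≤ 1 → η x = 1) (h0 : ∀ x : Vec 2, 2 ≤ enorm x → η x = 0) :
    ∃ L : ℝ, 0 ≤ L ∧ ∀ R : ℝ, 0 < R → ∃ φ : Vec 2 → ℝ, (∀ x, φ x = η (R⁻¹ • x)) ∧ ContDiff ℝ 1 φ ∧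
      (∀ x, ‖fderiv ℝ φ x‖ ≤ L * R⁻¹) ∧
      (∀ x y, ‖fderiv ℝ φ x - fderiv ℝ φ y‖ ≤ L * R⁻¹ ^ 2 * ‖x - y‖) ∧
      (∀ x y, |φ y - φ x| ≤ L * R⁻¹ * ‖y - x‖) ∧
      (∀ x y, |φ y - φ x - fderiv ℝ φ x (y - x)| ≤ L * R⁻¹ ^ 2 * ‖y - x‖ ^ 2) ∧
      (∀ x, ‖x‖ ≤ R / 2 → φ x = 1) ∧ (∀ x, 2 * R ≤ ‖x‖ → φ x = 0) ∧
      (∀ x, ‖x‖ < R / 2 → fderiv ℝ φ x = 0) ∧ (∀ x, 2 * R < ‖x‖ → fderiv ℝ φ x = 0) := by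
  have hη2 : ContDiff ℝ 2 η := hη.of_le (by
    have : ((2 : ℕ∞) : WithTop ℕ∞) ≤ ((⊤ : ℕ∞) : WithTop ℕ∞) := WithTop.coe_le_coe.mpr le_top
    exact this)
  have hcs : HasCompactSupport η := by
    refine HasCompactSupport.of_support_subset_isCompact (isCompact_closedBall (0 : Vec 2) 2) ?_
    intro x hx
    by_contra hcon
    apply hx
    apply h0
    simp at hcon
    exact hcon.le.trans (norm_le_enorm' x)
  have hd : ContDiff ℝ 1 (fderiv ℝ η) := hη2.fderiv_right (by norm_num)
  obtain ⟨C1, hC1⟩ := (hcs.fderiv (𝕜 := ℝ)).exists_bound_of_continuous hd.continuous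
  obtain ⟨C2, hC2⟩ := hd.lipschitzWith_of_hasCompactSupport (hcs.fderiv (𝕜 := ℝ)) one_ne_zero
  refine ⟨max C1 C2, le_max_of_le_right C2.2, fun R hR => ?_⟩
  set L := max C1 (C2 : ℝ)
  have hL : 0 ≤ L := le_max_of_le_right C2.2
  have hRi : 0 < R⁻¹ := inv_pos.mpr hR
  refine ⟨fun x => η (R⁻¹ • x), fun x => rfl, ?_, ?_⟩
  · exact (hη2.of_le (by norm_num)).comp (contDiff_const_smul _)
  have cφ : ContDiff ℝ 1 (fun x => η (R⁻¹ • x)) :=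
    (hη2.of_le (by norm_num)).comp (contDiff_const_smul _)
  have dφ : Differentiable ℝ (fun x => η (R⁻¹ • x)) := cφ.differentiable one_ne_zero
  have fd : ∀ x, fderiv ℝ (fun x => η (R⁻¹ • x)) x = R⁻¹ • fderiv ℝ η (R⁻¹ • x) := by
    intro x
    exact fderiv_comp_smul R⁻¹ 
  have b1 : ∀ x, ‖fderiv ℝ (fun x => η (R⁻¹ • x)) x‖ ≤ L * R⁻¹ := by
    intro x
    rw [fd, norm_smul, Real.norm_of_nonneg hRi.le, mul_comm]
    gcongr
    exact (hC1 _).trans (le_max_left _ _)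
  have b2 : ∀ x y, ‖fderiv ℝ (fun x => η (R⁻¹ • x)) x - fderiv ℝ (fun x => η (R⁻¹ • x)) y‖
      ≤ L * R⁻¹ ^ 2 * ‖x - y‖ := by
    intro x y
    have e : R⁻¹ • fderiv ℝ η (R⁻¹ • x) - R⁻¹ • fderiv ℝ η (R⁻¹ • y) =
      R⁻¹ • (fderiv ℝ η (R⁻¹ • x) - fderiv ℝ η (R⁻¹ • y)) := (smul_sub _ _ _).symm
    rw [fd, fd, e, norm_smul, Real.norm_of_nonneg hRi.le]
    have := hC2.norm_sub_le (R⁻¹ • x) (R⁻¹ • y)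
    rw [← smul_sub, norm_smul, Real.norm_of_nonneg hRi.le] at this
    calc _ ≤ R⁻¹ * (C2 * (R⁻¹ * ‖x - y‖)) := by gcongr
      _ ≤ R⁻¹ * (L * (R⁻¹ * ‖x - y‖)) := by gcongr; exact le_max_right _ _
      _ = _ := by ring
  have e1 : ∀ x : Vec 2, ‖x‖ ≤ R / 2 → η (R⁻¹ • x) = 1 := by
    intro x hx
    apply h1
    refine (enorm_le_two _).trans ?_
    rw [norm_smul, Real.norm_of_nonneg hRi.le]
    calc 2 * (R⁻¹ * ‖x‖) ≤ 2 * (R⁻¹ * (R / 2)) := by gcongr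
      _ = 1 := by field_simp
  have e0 : ∀ x : Vec 2, 2 * R ≤ ‖x‖ → η (R⁻¹ • x) = 0 := by
    intro x hx
    apply h0
    refine le_trans ?_ (norm_le_enorm' _)
    rw [norm_smul, Real.norm_of_nonneg hRi.le]
    calc 2 = R⁻¹ * (2 * R) := by field_simp
      _ ≤ _ := by gcongr
  refine ⟨b1, b2, ?_, ?_, e1, e0, ?_, ?_⟩
  · intro x y
    exact convex_univ.norm_image_sub_le_of_norm_fderiv_le (𝕜 := ℝ) (fun z _ => dφ z) (fun z _ => b1 z)
      (Set.mem_univ x) (Set.mem_univ y)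
  · intro x y
    have := (convex_closedBall x ‖y - x‖).norm_image_sub_le_of_norm_fderiv_le' (𝕜 := ℝ)
      (f := fun x => η (R⁻¹ • x)) (φ := fderiv ℝ (fun x => η (R⁻¹ • x)) x)
      (C := L * R⁻¹ ^ 2 * ‖y - x‖) (x := x) (y := y)
      (fun z _ => dφ z) (fun z hz => (b2 z x).trans (by
        gcongr; exact mem_closedBall_iff_norm.mp hz)) (by simp) (by simp [dist_eq_norm])
    refine this.trans (le_of_eq (by ring))
  · intro x hx
    have : (fun x => η (R⁻¹ • x)) =ᶠ[𝓝 x] fun _ => 1 := by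
      have : {y : Vec 2 | ‖y‖ < R / 2} ∈ 𝓝 x :=
        (isOpen_lt (by fun_prop) continuous_const).mem_nhds hx
      filter_upwards [this] with y hy using e1 y (le_of_lt hy)
    simp [this.fderiv_eq]
  · intro x hx
    have : (fun x => η (R⁻¹ • x)) =ᶠ[𝓝 x] fun _ => 0 := by
      have : {y : Vec 2 | 2 * R < ‖y‖} ∈ 𝓝 x :=
        (isOpen_lt continuous_const (by fun_prop)).mem_nhds hx
      filter_upwards [this] with y hy using e0 y (le_of_lt hy)
    simp [this.fderiv_eq]

lemma lip_far {X : Type*} [NormedAddCommGroup X] [NormedSpace ℝ X] (xh : Vec 2) (G : Vec 2 → X) (c : ℝ)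
    (hc : 0 ≤ c)
    (hG : ∀ x, x ≠ xh → DifferentiableAt ℝ G x) (hd : ∀ x, x ≠ xh → ‖fderiv ℝ G x‖ ≤ c * ‖x - xh‖⁻¹ ^ 2)
    (l : Vec 2) (B d : ℝ) (hdpos : 0 < d) (hl : B + d ≤ ‖l - xh‖) (x : Vec 2) (hx : ‖x - l‖ ≤ B) :
    ‖G x - G l‖ ≤ c * d⁻¹ ^ 2 * ‖x - l‖ := by
  have hfar : ∀ z ∈ Metric.closedBall l B, d ≤ ‖z - xh‖ := by
    intro z hz
    have h1 := mem_closedBall_iff_norm.mp hz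
    have := norm_sub_le_norm_sub_add_norm_sub l z xh
    rw [norm_sub_rev l z] at this
    linarith
  have hne : ∀ z ∈ Metric.closedBall l B, z ≠ xh := by
    intro z hz h
    have := hfar z hz
    rw [h] at this; simp at this; linarith
  refine (convex_closedBall l B).norm_image_sub_le_of_norm_fderiv_le (𝕜 := ℝ)
    (fun z hz => hG z (hne z hz)) (fun z hz => (hd z (hne z hz)).trans ?_) ?_ ?_
  · have := hfar z hz
    gcongr
  · simp; exact (norm_nonneg _).trans hx
  · exact mem_closedBall_iff_norm.mpr hx

lemma sum_by_parts (A : Matrix (Fin 2) (Fin 2) ℝ) (hA : IsUnit A.det) (Rs : Finset (Vec 2))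
    (hRlat : ∀ ρ ∈ Rs, ρ ∈ Lattice 2 A) (φ : Vec 2 → ℝ) (K : ℝ) (hφ : ∀ x, K ≤ ‖x‖ → φ x = 0)
    (w : Vec 2 → Vec 2 → ℝ) :
    ∑' z, φ (latticePt 2 A z) * ∑ ρ ∈ Rs, (w ρ (latticePt 2 A z - ρ) - w ρ (latticePt 2 A z)) =
    ∑' z, ∑ ρ ∈ Rs, w ρ (latticePt 2 A z) * (φ (latticePt 2 A z + ρ) - φ (latticePt 2 A z)) := by
  have sm : ∀ f : (Fin 2 → ℤ) → ℝ, Summable (fun z => φ (latticePt 2 A z) * f z) := by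
    intro f
    obtain ⟨s, hs⟩ := finsupp_lat A hA K (fun z => φ (latticePt 2 A z) * f z)
      (fun z hz => by simp [hφ _ hz.le])
    exact summable_of_ne_finset_zero hs
  have sh : ∀ ρ ∈ Rs, ∀ f : Vec 2 → ℝ,
      HasSum (fun z => f (latticePt 2 A z) * φ (latticePt 2 A z + ρ))
        (∑' z, φ (latticePt 2 A z) * f (latticePt 2 A z - ρ)) := by
    intro ρ hρ f
    obtain ⟨y, rfl⟩ := hRlat ρ hρ
    have h := (sm fun z => f (latticePt 2 A z - latticePt 2 A y)).hasSum
    have h' := (Equiv.hasSum_iff (Equiv.addRight y)).mpr h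
    convert h' using 1
    ext z
    simp [latticePt_add, mul_comm]
  have r : HasSum (fun z => ∑ ρ ∈ Rs, w ρ (latticePt 2 A z) *
      (φ (latticePt 2 A z + ρ) - φ (latticePt 2 A z)))
      (∑ ρ ∈ Rs, ((∑' z, φ (latticePt 2 A z) * w ρ (latticePt 2 A z - ρ)) -
        ∑' z, φ (latticePt 2 A z) * w ρ (latticePt 2 A z))) := by
    refine hasSum_sum fun ρ hρ => ?_
    have := (sh ρ hρ (w ρ)).sub (sm fun z => w ρ (latticePt 2 A z)).hasSum
    refine this.congr_fun ?_
    intro z; ring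
  rw [r.tsum_eq]
  have l : HasSum (fun z => φ (latticePt 2 A z) * ∑ ρ ∈ Rs, (w ρ (latticePt 2 A z - ρ) -
      w ρ (latticePt 2 A z)))
      (∑ ρ ∈ Rs, ((∑' z, φ (latticePt 2 A z) * w ρ (latticePt 2 A z - ρ)) -
        ∑' z, φ (latticePt 2 A z) * w ρ (latticePt 2 A z))) := by
    simp_rw [Finset.mul_sum, mul_sub]
    refine hasSum_sum fun ρ hρ => ?_
    exact (sm fun z => w ρ (latticePt 2 A z - ρ)).hasSum.sub (sm fun z => w ρ (latticePt 2 A z)).hasSum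
  exact l.tsum_eq

lemma single_norm (i : Fin 2) : ‖(Pi.single i 1 : Vec 2)‖ ≤ 1 := by
  rw [Pi.norm_single]; simp

/-- pointwise bound in the annulus -/
lemma term_bound (A : Matrix (Fin 2) (Fin 2) ℝ) (Rs : Finset (Vec 2)) (xh : Vec 2) (P Q : Vec 2 → ℝ) (c : ℝ)
    (hc : 0 ≤ c)
    (dP : ∀ x, x ≠ xh → DifferentiableAt ℝ P x) (dQ : ∀ x, x ≠ xh → DifferentiableAt ℝ Q x)
    (bP : ∀ x, x ≠ xh → |P x| ≤ c * ‖x - xh‖⁻¹) (bQ : ∀ x, x ≠ xh → |Q x| ≤ c * ‖x - xh‖⁻¹)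
    (bP' : ∀ x, x ≠ xh → ‖fderiv ℝ P x‖ ≤ c * ‖x - xh‖⁻¹ ^ 2)
    (bQ' : ∀ x, x ≠ xh → ‖fderiv ℝ Q x‖ ≤ c * ‖x - xh‖⁻¹ ^ 2)
    (q w : Vec 2 → ℝ)  -- values at `l`
    (l : Vec 2) (R : ℝ) (hR : 0 < R) (B : ℝ) (hB : 1 ≤ B) (hl : B + R / 8 ≤ ‖l - xh‖)
    (hRB : ∀ ρ ∈ Rs, ‖ρ‖ ≤ B)
    (bq : ∀ ρ ∈ Rs, |q ρ| ≤ c * ‖l - xh‖⁻¹)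
    (hqP : ∑ ρ ∈ Rs, q ρ * ρ 0 = |A.det| * P l) (hqQ : ∑ ρ ∈ Rs, q ρ * ρ 1 = |A.det| * Q l)
    (K : ℝ) (hK : 0 ≤ K) (hw : ∀ ρ ∈ Rs, |w ρ - q ρ| ≤ K * R⁻¹ ^ 2)
    (φ : Vec 2 → ℝ) (L : ℝ) (hL : 0 ≤ L) 
    (f1 : ∀ x, ‖fderiv ℝ φ x‖ ≤ L * R⁻¹)
    (f2 : ∀ x y, ‖fderiv ℝ φ x - fderiv ℝ φ y‖ ≤ L * R⁻¹ ^ 2 * ‖x - y‖)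
    (f3 : ∀ x y, |φ y - φ x| ≤ L * R⁻¹ * ‖y - x‖)
    (f4 : ∀ x y, |φ y - φ x - fderiv ℝ φ x (y - x)| ≤ L * R⁻¹ ^ 2 * ‖y - x‖ ^ 2)
    (E : Vec 2 → ℝ) (hE : E = fun x => P x * fderiv ℝ φ x (Pi.single 0 1) + Q x * fderiv ℝ φ x (Pi.single 1 1)) 
    (z : Fin 2 → ℤ) (hi : IntegrableOn (fun y => E (A.mulVec y)) (cell z))
    (hcell : ∀ y ∈ cell z, ‖A.mulVec y - l‖ ≤ B) :
    |∑ ρ ∈ Rs, w ρ * (φ (l + ρ) - φ l) - |A.det| * ∫ y in cell z, E (A.mulVec y)| ≤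
      (Rs.card * (K * (L * B) + 8 * c * (L * B ^ 2)) + |A.det| * (144 * c * L * B)) * R⁻¹ ^ 3 := by
  have hs : 0 < R⁻¹ := inv_pos.mpr hR
  have hd8 : 0 < R / 8 := by linarith
  have hfar : ∀ x, ‖x - l‖ ≤ B → R / 8 ≤ ‖x - xh‖ := by
    intro x hx
    have := norm_sub_le_norm_sub_add_norm_sub l x xh
    rw [norm_sub_rev l x] at this
    linarith
  have hne : ∀ x, ‖x - l‖ ≤ B → x ≠ xh := by
    intro x hx h
    have := hfar x hx
    rw [h] at this; simp at this; linarith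
  have hll : ‖l - l‖ ≤ B := by simp; linarith
  have hinv : ‖l - xh‖⁻¹ ≤ 8 * R⁻¹ := by
    have : ‖l - xh‖⁻¹ ≤ (R / 8)⁻¹ := inv_anti₀ hd8 (hfar l hll)
    refine this.trans (le_of_eq ?_); field_simp
  have hinv2 : (R / 8)⁻¹ = 8 * R⁻¹ := by field_simp
  have ev : ∀ (T : Vec 2 →L[ℝ] ℝ) (i : Fin 2), |T (Pi.single i 1)| ≤ ‖T‖ := by
    intro T i
    refine (T.le_opNorm _).trans ?_
    exact mul_le_of_le_one_right (norm_nonneg _) (single_norm i)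
  have piece : ∀ (G : Vec 2 → ℝ) (i : Fin 2), (∀ x, x ≠ xh → DifferentiableAt ℝ G x) →
      (∀ x, x ≠ xh → |G x| ≤ c * ‖x - xh‖⁻¹) → (∀ x, x ≠ xh → ‖fderiv ℝ G x‖ ≤ c * ‖x - xh‖⁻¹ ^ 2) →
      ∀ x, ‖x - l‖ ≤ B → |G x * fderiv ℝ φ x (Pi.single i 1) - G l * fderiv ℝ φ l (Pi.single i 1)|
        ≤ 72 * c * L * B * R⁻¹ ^ 3 := by
    intro G i dG bG bG' x hx
    have h1 := lip_far xh G c hc dG bG' l B (R / 8) hd8 hl x hx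
    rw [hinv2, Real.norm_eq_abs] at h1
    have h1' : |G x - G l| ≤ c * (8 * R⁻¹) ^ 2 * B := h1.trans (by gcongr)
    have h2 : |G l| ≤ c * (8 * R⁻¹) := (bG l (hne l hll)).trans (by gcongr)
    have h3 : |fderiv ℝ φ x (Pi.single i 1)| ≤ L * R⁻¹ := (ev _ i).trans (f1 x)
    have h4 : |fderiv ℝ φ x (Pi.single i 1) - fderiv ℝ φ l (Pi.single i 1)| ≤ L * R⁻¹ ^ 2 * B := by
      have := (ev (fderiv ℝ φ x - fderiv ℝ φ l) i).trans (f2 x l)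
      exact this.trans (by gcongr)
    have e : G x * fderiv ℝ φ x (Pi.single i 1) - G l * fderiv ℝ φ l (Pi.single i 1) =
      (G x - G l) * fderiv ℝ φ x (Pi.single i 1) + 
        G l * (fderiv ℝ φ x (Pi.single i 1) - fderiv ℝ φ l (Pi.single i 1)) := by ring
    rw [e]
    refine (abs_add_le _ _).trans ?_
    rw [abs_mul, abs_mul]
    calc _ ≤ (c * (8 * R⁻¹) ^ 2 * B) * (L * R⁻¹) + (c * (8 * R⁻¹)) * (L * R⁻¹ ^ 2 * B) := by gcongr
      _ = _ := by ring
  have Ed : ∀ x, ‖x - l‖ ≤ B → |E x - E l| ≤ 144 * c * L * B * R⁻¹ ^ 3 := by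
    intro x hx
    have a := piece P 0 dP bP bP' x hx
    have b := piece Q 1 dQ bQ bQ' x hx
    rw [hE]
    simp only
    have := abs_add_le (P x * fderiv ℝ φ x (Pi.single 0 1) - P l * fderiv ℝ φ l (Pi.single 0 1))
      (Q x * fderiv ℝ φ x (Pi.single 1 1) - Q l * fderiv ℝ φ l (Pi.single 1 1))
    refine le_trans (le_of_eq ?_) (this.trans ((add_le_add a b).trans (le_of_eq (by ring))))
    congr 1; ring
  have Ei : |E l - ∫ y in cell z, E (A.mulVec y)| ≤ 144 * c * L * B * R⁻¹ ^ 3 := by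
    have v1 : volume.real (cell z) = 1 := by simp [Measure.real, cell_vol]
    have e : E l = ∫ y in cell z, E l := by
      rw [setIntegral_const, v1, one_smul]
    have ic : IntegrableOn (fun _ : Vec 2 => E l) (cell z) :=
      integrableOn_const (by rw [cell_vol]; exact ENNReal.one_ne_top)
    rw [e, ← integral_sub ic hi]
    have := norm_setIntegral_le_of_norm_le_const (μ := volume) (s := cell z)
      (f := fun y => E l - E (A.mulVec y)) (C := 144 * c * L * B * R⁻¹ ^ 3)
      (by rw [cell_vol]; exact ENNReal.one_lt_top) (fun y hy => by
        rw [norm_sub_rev]; exact Ed _ (hcell y hy))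
    rw [v1, mul_one] at this
    exact this
  have Tl : ∀ ρ : Vec 2, fderiv ℝ φ l ρ = ρ 0 * fderiv ℝ φ l (Pi.single 0 1) + ρ 1 * fderiv ℝ φ l (Pi.single 1 1) := by
    intro ρ
    have : ρ = ρ 0 • Pi.single 0 1 + ρ 1 • Pi.single 1 1 := by
      ext i; fin_cases i <;> simp
    conv_lhs => rw [this]
    simp only [map_add, map_smul, smul_eq_mul]
  have Es : ∑ ρ ∈ Rs, q ρ * fderiv ℝ φ l ρ = |A.det| * E l := by
    calc _ = (∑ ρ ∈ Rs, q ρ * ρ 0) * fderiv ℝ φ l (Pi.single 0 1) +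
          (∑ ρ ∈ Rs, q ρ * ρ 1) * fderiv ℝ φ l (Pi.single 1 1) := by
          rw [Finset.sum_mul, Finset.sum_mul, ← Finset.sum_add_distrib]
          refine Finset.sum_congr rfl fun ρ _ => ?_
          rw [Tl]; ring
      _ = _ := by rw [hqP, hqQ, hE]; ring
  have dec : ∑ ρ ∈ Rs, w ρ * (φ (l + ρ) - φ l) - |A.det| * ∫ y in cell z, E (A.mulVec y) =
      ∑ ρ ∈ Rs, ((w ρ - q ρ) * (φ (l + ρ) - φ l) + q ρ * (φ (l + ρ) - φ l - fderiv ℝ φ l ρ)) +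
      |A.det| * (E l - ∫ y in cell z, E (A.mulVec y)) := by
    rw [mul_sub, ← Es, add_sub, ← Finset.sum_add_distrib]
    congr 1
    refine Finset.sum_congr rfl fun ρ _ => ?_
    ring
  rw [dec]
  refine (abs_add_le _ _).trans ?_
  rw [add_mul]
  refine add_le_add ?_ ?_
  · refine (Finset.abs_sum_le_sum_abs _ _).trans ?_
    have : ∀ ρ ∈ Rs, |(w ρ - q ρ) * (φ (l + ρ) - φ l) + q ρ * (φ (l + ρ) - φ l - fderiv ℝ φ l ρ)| ≤
        (K * (L * B) + 8 * c * (L * B ^ 2)) * R⁻¹ ^ 3 := by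
      intro ρ hρ
      refine (abs_add_le _ _).trans ?_
      rw [abs_mul, abs_mul]
      have g3 := f3 l (l + ρ)
      have g4 := f4 l (l + ρ)
      rw [add_sub_cancel_left] at g3 g4
      have g3' : |φ (l + ρ) - φ l| ≤ L * R⁻¹ * B := g3.trans (by gcongr; exact hRB ρ hρ)
      have g4' : |φ (l + ρ) - φ l - fderiv ℝ φ l ρ| ≤ L * R⁻¹ ^ 2 * B ^ 2 :=
        g4.trans (by gcongr; exact hRB ρ hρ)
      have g5 := hw ρ hρ
      have g6 : |q ρ| ≤ c * (8 * R⁻¹) := (bq ρ hρ).trans (by gcongr)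
      calc _ ≤ (K * R⁻¹ ^ 2) * (L * R⁻¹ * B) + (c * (8 * R⁻¹)) * (L * R⁻¹ ^ 2 * B ^ 2) := by gcongr
        _ = _ := by ring
    refine (Finset.sum_le_card_nsmul _ _ _ this).trans (le_of_eq ?_)
    rw [nsmul_eq_mul]; ring
  · rw [abs_mul, abs_abs, mul_assoc]
    gcongr

lemma main_scalar (A : Matrix (Fin 2) (Fin 2) ℝ) (hA : IsUnit A.det) (Rs : Finset (Vec 2))
    (hRlat : ∀ ρ ∈ Rs, ρ ∈ Lattice 2 A) (xh : Vec 2) (P Q : Vec 2 → ℝ) (c : ℝ) (hc : 0 ≤ c)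
    (hP : ContDiffOn ℝ 1 P {x | x ≠ xh}) (hQ : ContDiffOn ℝ 1 Q {x | x ≠ xh})
    (hdiv : ∀ x, x ≠ xh → fderiv ℝ P x (Pi.single 0 1) + fderiv ℝ Q x (Pi.single 1 1) = 0)
    (bP : ∀ x, x ≠ xh → |P x| ≤ c * ‖x - xh‖⁻¹) (bQ : ∀ x, x ≠ xh → |Q x| ≤ c * ‖x - xh‖⁻¹)
    (bP' : ∀ x, x ≠ xh → ‖fderiv ℝ P x‖ ≤ c * ‖x - xh‖⁻¹ ^ 2)
    (bQ' : ∀ x, x ≠ xh → ‖fderiv ℝ Q x‖ ≤ c * ‖x - xh‖⁻¹ ^ 2)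
    (q w : Vec 2 → Vec 2 → ℝ)
    (bq : ∀ ρ ∈ Rs, ∀ x, x ≠ xh → |q ρ x| ≤ c * ‖x - xh‖⁻¹)
    (hqP : ∀ x, ∑ ρ ∈ Rs, q ρ x * ρ 0 = |A.det| * P x)
    (hqQ : ∀ x, ∑ ρ ∈ Rs, q ρ x * ρ 1 = |A.det| * Q x)
    (K r₀ : ℝ) (hK : 0 ≤ K)
    (hw : ∀ z, r₀ ≤ ‖latticePt 2 A z‖ → ∀ ρ ∈ Rs, |w ρ (latticePt 2 A z) - q ρ (latticePt 2 A z)| ≤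
      K * ‖latticePt 2 A z‖⁻¹ ^ 2)
    (η : Vec 2 → ℝ) (hη : ContDiff ℝ (⊤ : ℕ∞) η)
    (h1 : ∀ x : Vec 2, enorm x ≤ 1 → η x = 1) (h0 : ∀ x : Vec 2, 2 ≤ enorm x → η x = 0) :
    Tendsto (fun R : ℝ => ∑' z, η (R⁻¹ • latticePt 2 A z) *
      ∑ ρ ∈ Rs, (w ρ (latticePt 2 A z - ρ) - w ρ (latticePt 2 A z))) atTop
      (𝓝 (- ∫ θ in (0:ℝ)..(2 * Real.pi), (P (xh + ![Real.cos θ, Real.sin θ]) * Real.cos θ +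
        Q (xh + ![Real.cos θ, Real.sin θ]) * Real.sin θ))) := by
  have hdet : A.det ≠ 0 := hA.ne_zero
  have hopen : IsOpen {x : Vec 2 | x ≠ xh} := isOpen_ne
  have dP : ∀ x, x ≠ xh → DifferentiableAt ℝ P x := fun x hx =>
    (hP.differentiableOn one_ne_zero).differentiableAt (hopen.mem_nhds hx)
  have dQ : ∀ x, x ≠ xh → DifferentiableAt ℝ Q x := fun x hx =>
    (hQ.differentiableOn one_ne_zero).differentiableAt (hopen.mem_nhds hx)
  obtain ⟨M, hM, hM1, hM2⟩ := A_bounds A hA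
  obtain ⟨L, hL, hcut⟩ := cutoff η hη h1 h0
  obtain ⟨B₀, hB₀⟩ : ∃ B₀ : ℝ, ∀ ρ ∈ Rs, ‖ρ‖ ≤ B₀ :=
    ⟨∑ ρ ∈ Rs, ‖ρ‖, fun ρ hρ => Finset.single_le_sum (f := fun ρ : Vec 2 => ‖ρ‖) (fun _ _ => norm_nonneg _) hρ⟩
  set B := max M B₀
  have hMB : M ≤ B := le_max_left _ _
  have hB1 : 1 ≤ B := hM.trans hMB
  have hRB : ∀ ρ ∈ Rs, ‖ρ‖ ≤ B := fun ρ hρ => (hB₀ ρ hρ).trans (le_max_right _ _)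
  have hcell : ∀ z, ∀ y ∈ cell z, ‖A.mulVec y - latticePt 2 A z‖ ≤ B := by
    intro z y hy
    rw [latticePt_eq, ← Matrix.mulVec_sub]
    refine (hM1 _).trans ?_
    have := cell_dist z y hy
    nlinarith
  set J := - ∫ θ in (0:ℝ)..(2 * Real.pi), (P (xh + ![Real.cos θ, Real.sin θ]) * Real.cos θ +
        Q (xh + ![Real.cos θ, Real.sin θ]) * Real.sin θ) with hJ
  set R₀ := 8 * (B + ‖xh‖ + |r₀| + 3) with hR₀
  have hxh := norm_nonneg xh
  have hr0 := abs_nonneg r₀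
  have hr0' := le_abs_self r₀
  choose! φ hφη hφC f1 f2 f3 f4 f5 f6 f7 f8 using hcut
  let E : ℝ → Vec 2 → ℝ := fun R x =>
    P x * fderiv ℝ (φ R) x (Pi.single 0 1) + Q x * fderiv ℝ (φ R) x (Pi.single 1 1)
  let T : ℝ → (Fin 2 → ℤ) → ℝ := fun R z =>
    ∑ ρ ∈ Rs, w ρ (latticePt 2 A z) * (φ R (latticePt 2 A z + ρ) - φ R (latticePt 2 A z)) -
      |A.det| * ∫ y in cell z, E R (A.mulVec y)
  have E7 : ∀ R, 0 < R → ∀ x, ‖x‖ < R / 2 → E R x = 0 := by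
    intro R hR x hx; simp [E, f7 R hR x hx]
  have E8 : ∀ R, 0 < R → ∀ x, 2 * R < ‖x‖ → E R x = 0 := by
    intro R hR x hx; simp [E, f8 R hR x hx]
  have Ec : ∀ R, R₀ ≤ R → Continuous (E R) := by
    intro R hR
    have hRp : 0 < R := by linarith
    rw [continuous_iff_continuousAt]
    intro x
    by_cases hx : x = xh
    · have hx' : ‖x‖ < R / 2 := by rw [hx]; linarith
      have : E R =ᶠ[𝓝 x] fun _ => 0 := by
        have : {y : Vec 2 | ‖y‖ < R / 2} ∈ 𝓝 x :=
          (isOpen_lt (by fun_prop) continuous_const).mem_nhds hx'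
        filter_upwards [this] with y hy using E7 R hRp y hy
      exact continuousAt_const.congr this.symm
    · have c1 := (dP x hx).continuousAt
      have c2 := (dQ x hx).continuousAt
      have cφ : Continuous (fderiv ℝ (φ R)) := (hφC R hRp).continuous_fderiv one_ne_zero
      have c3 : Continuous fun x => fderiv ℝ (φ R) x (Pi.single 0 1) := by fun_prop
      have c4 : Continuous fun x => fderiv ℝ (φ R) x (Pi.single 1 1) := by fun_prop
      exact (c1.mul c3.continuousAt).add (c2.mul c4.continuousAt)
  have Es : ∀ R, R₀ ≤ R → HasCompactSupport (E R) := by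
    intro R hR
    have hRp : 0 < R := by linarith
    refine HasCompactSupport.of_support_subset_isCompact (isCompact_closedBall (0 : Vec 2) (2 * R)) ?_
    intro x hx
    by_contra hcon
    apply hx
    simp at hcon
    exact E8 R hRp x hcon
  have EJ : ∀ R, R₀ ≤ R → ∫ x, E R x = J := by
    intro R hR
    have hRp : 0 < R := by linarith
    refine div_polar xh P Q (φ R) hP hQ hdiv (hφC R hRp) ?_ (2 * (2 * R + ‖xh‖) + 1) (by linarith) ?_
    · intro x hx
      apply f5 R hRp
      have : ‖x‖ ≤ ‖x - xh‖ + ‖xh‖ := norm_le_norm_sub_add x xh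
      linarith
    · intro x hx
      apply f6 R hRp
      have : ‖x - xh‖ ≤ ‖x‖ + ‖xh‖ := norm_sub_le _ _
      linarith
  -- vanishing of T
  have T0 : ∀ R, R₀ ≤ R → ∀ z, (‖latticePt 2 A z‖ < R / 4 ∨ 3 * R < ‖latticePt 2 A z‖) → T R z = 0 := by
    intro R hR z hz
    have hRp : 0 < R := by linarith
    set l := latticePt 2 A z
    have p1 : ∀ ρ ∈ Rs, φ R (l + ρ) - φ R l = 0 := by
      intro ρ hρ
      have hb := hRB ρ hρ
      have n1 := norm_add_le l ρ
      have n2 := norm_sub_norm_le l (-ρ)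
      rw [sub_neg_eq_add, norm_neg] at n2
      rcases hz with hz | hz
      · rw [f5 R hRp _ (by linarith), f5 R hRp _ (by linarith), sub_self]
      · rw [f6 R hRp _ (by linarith), f6 R hRp _ (by linarith), sub_self]
    have p2 : ∀ y ∈ cell z, E R (A.mulVec y) = 0 := by
      intro y hy
      have hb := hcell z y hy
      have n1 : ‖A.mulVec y‖ ≤ ‖A.mulVec y - l‖ + ‖l‖ := norm_le_norm_sub_add _ l
      have n2 : ‖l‖ ≤ ‖l - A.mulVec y‖ + ‖A.mulVec y‖ := norm_le_norm_sub_add l _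
      rw [norm_sub_rev] at n2
      change ‖A.mulVec y - l‖ ≤ B at hb
      rcases hz with hz | hz
      · exact E7 R hRp _ (by linarith)
      · exact E8 R hRp _ (by linarith)
    simp only [T]
    rw [Finset.sum_eq_zero (fun ρ hρ => by rw [p1 ρ hρ, mul_zero]),
      setIntegral_congr_fun (cell_meas z) (fun y hy => p2 y hy)]
    simp
  set Kf := (Rs.card * (16 * K * (L * B) + 8 * c * (L * B ^ 2)) + |A.det| * (144 * c * L * B)) with hKf
  have hKf0 : 0 ≤ Kf := by positivity
  have Tb : ∀ R, R₀ ≤ R → ∀ z, |T R z| ≤ Kf * R⁻¹ ^ 3 := by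
    intro R hR z
    have hRp : 0 < R := by linarith
    by_cases hz : (‖latticePt 2 A z‖ < R / 4 ∨ 3 * R < ‖latticePt 2 A z‖)
    · rw [T0 R hR z hz, abs_zero]
      have : 0 < R⁻¹ := inv_pos.mpr hRp
      positivity
    push Not at hz
    have hl : B + R / 8 ≤ ‖latticePt 2 A z - xh‖ := by
      have := norm_sub_norm_le (latticePt 2 A z) xh
      linarith
    have hne : latticePt 2 A z ≠ xh := by
      intro h; rw [h] at hl; simp at hl; linarith
    refine term_bound A Rs xh P Q c hc dP dQ bP bQ bP' bQ' (fun ρ => q ρ (latticePt 2 A z))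
      (fun ρ => w ρ (latticePt 2 A z)) (latticePt 2 A z) R hRp B hB1 hl hRB (fun ρ hρ => bq ρ hρ _ hne)
      (hqP _) (hqQ _) (16 * K) (by positivity) (fun ρ hρ => (hw z (by linarith) ρ hρ).trans ?_) (φ R) L hL (f1 R hRp)
      (f2 R hRp) (f3 R hRp) (f4 R hRp) (E R) rfl z ?_ (hcell z)
    · have : ‖latticePt 2 A z‖⁻¹ ≤ 4 * R⁻¹ := by
        have := inv_anti₀ (by linarith : 0 < R / 4) hz.1
        refine this.trans (le_of_eq ?_); field_simp
      calc K * ‖latticePt 2 A z‖⁻¹ ^ 2 ≤ K * (4 * R⁻¹) ^ 2 := by gcongr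
        _ = _ := by ring
    · have hcont : Continuous fun y => E R (A.mulVec y) := by
        refine (Ec R hR).comp ?_
        exact (Matrix.toLin' A).continuous_of_finiteDimensional
      have hsub : cell z ⊆ Metric.closedBall (zc z) 1 := fun y hy =>
        mem_closedBall_iff_norm.mpr (cell_dist z y hy)
      exact (hcont.continuousOn.integrableOn_compact (isCompact_closedBall (zc z) 1)).mono_set hsub
  have lim := (err_sum A hA T R₀ Kf Tb (fun R hR z hz => T0 R hR z (Or.inr hz))).add_const J
  rw [zero_add] at lim
  refine lim.congr' ?_
  filter_upwards [eventually_ge_atTop R₀] with R hR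
  have hRp : 0 < R := by linarith
  have hs := (cells_sum A hA (E R) (Ec R hR) (Es R hR)).mul_left |A.det|
  rw [EJ R hR, ← mul_assoc, mul_inv_cancel₀ (abs_ne_zero.mpr hdet), one_mul] at hs
  have hT : Summable (T R) := by
    obtain ⟨s, hs⟩ := finsupp_lat A hA (3 * R) (T R) (fun z hz => T0 R hR z (Or.inr hz))
    exact summable_of_ne_finset_zero hs
  have := hT.hasSum.add hs
  rw [← this.tsum_eq]
  have hsp := sum_by_parts A hA Rs hRlat (φ R) (2 * R) (f6 R hRp) w
  simp only [hφη R hRp] at hsp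
  rw [hsp]
  refine tsum_congr fun z => ?_
  simp [T, hφη R hRp]

lemma seg_est {N : ℕ} (Γ : Set (Vec 2)) (u : Vec 2 → Vec N) (F : Vec 2 → Vec 2 →L[ℝ] Vec N)
    (hF : ∀ x : Vec 2, x ∉ Γ → HasFDerivAt u (F x) x) (x y : Vec 2) (L : Vec 2 →L[ℝ] Vec N) (C : ℝ)
    (hseg : ∀ p ∈ segment ℝ x y, p ∉ Γ) (hb : ∀ p ∈ segment ℝ x y, ‖F p - L‖ ≤ C) :
    ‖u y - u x - L (y - x)‖ ≤ C * ‖y - x‖ :=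
  (convex_segment x y).norm_image_sub_le_of_norm_hasFDerivWithin_le' (𝕜 := ℝ)
    (fun p hp => (hF p (hseg p hp)).hasFDerivWithinAt) hb (left_mem_segment ℝ x y) (right_mem_segment ℝ x y)

lemma half_est {N : ℕ} (Γ : Set (Vec 2)) (u : Vec 2 → Vec N) (F : Vec 2 → Vec 2 →L[ℝ] Vec N)
    (hF : ∀ x : Vec 2, x ∉ Γ → HasFDerivAt u (F x) x) (x p : Vec 2) (L : Vec 2 →L[ℝ] Vec N) (C : ℝ)
    (S : Set (Vec 2)) (hS : Convex ℝ S) (hSΓ : ∀ q ∈ S, q ∉ Γ) (hx : x ∈ S) (u0 : Vec N)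
    (hu0 : Tendsto u (𝓝[S] p) (𝓝 u0))
    (hin : ∀ s : ℝ, 0 ≤ s → s < 1 → AffineMap.lineMap x p s ∈ S)
    (hb : ∀ q ∈ segment ℝ x p, ‖F q - L‖ ≤ C) :
    ‖u0 - u x - L (p - x)‖ ≤ C * ‖p - x‖ := by
  have hcont : Continuous (fun s : ℝ => (AffineMap.lineMap x p s : Vec 2)) := AffineMap.lineMap_continuous
  have ev : ∀ᶠ s : ℝ in 𝓝[<] 1, 0 ≤ s ∧ s < 1 := by
    have : Set.Ico (0:ℝ) 1 ∈ 𝓝[<] (1:ℝ) := Ico_mem_nhdsLT zero_lt_one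
    exact this
  have t0 : Tendsto (fun s : ℝ => (AffineMap.lineMap x p s : Vec 2)) (𝓝[<] 1) (𝓝 p) := by
    have := (hcont.tendsto 1).mono_left (nhdsWithin_le_nhds (s := Set.Iio 1))
    simpa using this
  have t1 : Tendsto (fun s : ℝ => (AffineMap.lineMap x p s : Vec 2)) (𝓝[<] 1) (𝓝[S] p) :=
    tendsto_nhdsWithin_iff.mpr ⟨t0, ev.mono fun s hs => hin s hs.1 hs.2⟩
  have t2 := hu0.comp t1
  have l1 : Tendsto (fun s : ℝ => ‖u (AffineMap.lineMap x p s) - u x - L (AffineMap.lineMap x p s - x)‖)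
      (𝓝[<] 1) (𝓝 ‖u0 - u x - L (p - x)‖) :=
    ((t2.sub_const _).sub ((L.continuous.tendsto _).comp (t0.sub_const x))).norm
  have l2 : Tendsto (fun s : ℝ => C * ‖(AffineMap.lineMap x p s : Vec 2) - x‖)
      (𝓝[<] 1) (𝓝 (C * ‖p - x‖)) := (t0.sub_const x).norm.const_mul C
  refine le_of_tendsto_of_tendsto l1 l2 ?_
  filter_upwards [ev] with s hs
  have hm := hin s hs.1 hs.2
  refine seg_est Γ u F hF x _ L C (fun q hq => hSΓ q (hS.segment_subset hx hm hq)) (fun q hq => hb q ?_)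
  have : (AffineMap.lineMap x p s : Vec 2) ∈ segment ℝ x p := by
    rw [segment_eq_image_lineMap]
    exact ⟨s, ⟨hs.1, hs.2.le⟩, rfl⟩
  exact (convex_segment x p).segment_subset (left_mem_segment ℝ x p) this hq

lemma cross_est {N : ℕ} (xhat : Vec 2) (Γ : Set (Vec 2))
    (hΓ : Γ = {x : Vec 2 | x 1 = xhat 1 ∧ xhat 0 ≤ x 0}) (bvec : Vec N)
    (u : Vec 2 → Vec N) (F : Vec 2 → Vec 2 →L[ℝ] Vec N)
    (hF : ∀ x : Vec 2, x ∉ Γ → HasFDerivAt u (F x) x)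
    (hjump : ∀ x ∈ Γ, x ≠ xhat →
      ∃ uplus uminus : Vec N,
        Tendsto u (𝓝[{y : Vec 2 | xhat 1 < y 1}] x) (𝓝 uplus) ∧
        Tendsto u (𝓝[{y : Vec 2 | y 1 < xhat 1}] x) (𝓝 uminus) ∧
        uplus - uminus = -bvec)
    (x y p : Vec 2) (L : Vec 2 →L[ℝ] Vec N) (C : ℝ) (hx : x 1 < xhat 1) (hy : xhat 1 < y 1)
    (hp : p ∈ segment ℝ x y) (hpΓ : p ∈ Γ) (hne : p ≠ xhat)
    (hb : ∀ q ∈ segment ℝ x y, ‖F q - L‖ ≤ C) :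
    ‖u y - u x + bvec - L (y - x)‖ ≤ C * ‖y - x‖ := by
  obtain ⟨up, um, hup, hum, hj⟩ := hjump p hpΓ hne
  have hp1 : p 1 = xhat 1 := by rw [hΓ] at hpΓ; exact hpΓ.1
  have cl : Convex ℝ {y : Vec 2 | y 1 < xhat 1} :=
    convex_halfSpace_lt (LinearMap.proj (R := ℝ) (φ := fun _ : Fin 2 => ℝ) 1).isLinear _
  have cu : Convex ℝ {y : Vec 2 | xhat 1 < y 1} :=
    convex_halfSpace_gt (LinearMap.proj (R := ℝ) (φ := fun _ : Fin 2 => ℝ) 1).isLinear _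
  have e1 := half_est Γ u F hF x p L C {y : Vec 2 | y 1 < xhat 1} cl
    (fun q hq h => by rw [hΓ] at h; exact absurd h.1 (ne_of_lt hq)) hx um hum
    (fun s h0 h1 => by
      simp only [Set.mem_setOf_eq, AffineMap.lineMap_apply, vsub_eq_sub, vadd_eq_add, Pi.add_apply, Pi.smul_apply,
        Pi.sub_apply, smul_eq_mul, hp1]
      nlinarith)
    (fun q hq => hb q ((convex_segment x y).segment_subset (left_mem_segment ℝ x y) hp hq))
  have e2 := half_est Γ u F hF y p L C {y : Vec 2 | xhat 1 < y 1} cu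
    (fun q hq h => by rw [hΓ] at h; exact absurd h.1 (ne_of_gt hq)) hy up hup
    (fun s h0 h1 => by
      simp only [Set.mem_setOf_eq, AffineMap.lineMap_apply, vsub_eq_sub, vadd_eq_add, Pi.add_apply, Pi.smul_apply,
        Pi.sub_apply, smul_eq_mul, hp1]
      nlinarith)
    (fun q hq => hb q ((convex_segment x y).segment_subset (right_mem_segment ℝ x y) hp hq))
  have hn : ‖p - x‖ + ‖p - y‖ = ‖y - x‖ := by
    have := dist_add_dist_of_mem_segment hp
    rw [dist_eq_norm, dist_eq_norm, dist_eq_norm] at this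
    rw [norm_sub_rev p x, norm_sub_rev y x]; exact this
  have hb' : bvec = um - up := by rw [← neg_sub, hj, neg_neg]
  have key : u y - u x + bvec - L (y - x) = (um - u x - L (p - x)) - (up - u y - L (p - y)) := by
    rw [hb']
    simp only [map_sub]
    abel
  rw [key, ← hn, mul_add]
  exact (norm_sub_le _ _).trans (add_le_add e1 e2)

lemma conv_pos {a b s t : ℝ} (ha : 0 ≤ a) (hb : 0 ≤ b) (hab : a + b = 1) (hs : 0 < s) (ht : 0 < t) :
    0 < a * s + b * t := by
  rcases ha.lt_or_eq with h | h
  · have := mul_pos h hs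
    have := mul_nonneg hb ht.le
    linarith
  · have hb1 : b = 1 := by linarith
    subst hb1
    rw [← h]
    linarith

lemma diff_est {N : ℕ} (xhat : Vec 2) (Γ : Set (Vec 2))
    (hΓ : Γ = {x : Vec 2 | x 1 = xhat 1 ∧ xhat 0 ≤ x 0})
    (u : Vec 2 → Vec N) (F : Vec 2 → Vec 2 →L[ℝ] Vec N)
    (hF : ∀ x : Vec 2, x ∉ Γ → HasFDerivAt u (F x) x)
    (hjump : ∀ x ∈ Γ, x ≠ xhat →
      ∃ uplus uminus : Vec N,
        Tendsto u (𝓝[{y : Vec 2 | xhat 1 < y 1}] x) (𝓝 uplus) ∧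
        Tendsto u (𝓝[{y : Vec 2 | y 1 < xhat 1}] x) (𝓝 uminus) ∧
        uplus - uminus = -(0 : Vec N))
    (x y : Vec 2) (L : Vec 2 →L[ℝ] Vec N) (C : ℝ) (hx : x ∉ Γ) (hy : y ∉ Γ)
    (hne : ∀ p ∈ segment ℝ x y, p ≠ xhat)
    (hb : ∀ q ∈ segment ℝ x y, ‖F q - L‖ ≤ C) :
    ‖u y - u x - L (y - x)‖ ≤ C * ‖y - x‖ := by
  by_cases hex : ∃ p ∈ segment ℝ x y, p ∈ Γ
  swap
  · push Not at hex
    exact seg_est Γ u F hF x y L C hex hb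
  obtain ⟨p, hp, hpΓ⟩ := hex
  have hpne := hne p hp
  have hpΓ' := hpΓ
  obtain ⟨a, b, ha, hb0, hab, rfl⟩ := id hp
  rw [hΓ] at hpΓ' hx hy
  simp only [Set.mem_setOf_eq, Pi.add_apply, Pi.smul_apply, smul_eq_mul, not_and, not_le] at hpΓ' hx hy
  obtain ⟨h1, h2⟩ := hpΓ'
  have ha' : a = 1 - b := by linarith
  have hs : a * xhat 1 + b * xhat 1 = xhat 1 := by rw [← add_mul, hab, one_mul]
  rcases lt_trichotomy (x 1) (xhat 1) with h | h | h
  · rcases lt_trichotomy (y 1) (xhat 1) with h' | h' | h'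
    · exfalso
      have := conv_pos ha hb0 hab (sub_pos.mpr h) (sub_pos.mpr h')
      linarith
    · exfalso
      have := hy h'
      have hb1 : b = 1 := by
        by_contra hne1
        have : 0 < a := by
          rcases ha.lt_or_eq with h3 | h3
          · exact h3
          · exact absurd (by linarith) hne1
        have := mul_pos this (sub_pos.mpr h)
        rw [h'] at h1
        linarith
      subst hb1
      simp at ha'
      subst ha'
      simp at h2
      linarith
    · have := cross_est xhat Γ hΓ 0 u F hF hjump x y _ L C h h' hp hpΓ hpne hb
      simpa using this
  · have hx0 := hx h
    have : b * (y 1 - xhat 1) = 0 := by rw [ha', h] at h1; linarith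
    rcases mul_eq_zero.mp this with h3 | h3
    · subst h3
      simp at ha'
      subst ha'
      simp at h2
      linarith
    · have hy0 := hy (by linarith)
      exfalso
      have : a * (xhat 0 - x 0) + b * (xhat 0 - y 0) ≤ 0 := by
        rw [ha'] at h2 ⊢
        linarith
      rcases hb0.lt_or_eq with h4 | h4
      · nlinarith [mul_pos h4 (sub_pos.mpr hy0), mul_nonneg ha (sub_pos.mpr hx0).le]
      · subst h4
        simp at ha'
        subst ha'
        linarith
  · rcases lt_trichotomy (y 1) (xhat 1) with h' | h' | h'
    · have := cross_est xhat Γ hΓ 0 u F hF hjump y x _ L C h' h (by rwa [segment_symm]) hpΓ hpne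
        (by rwa [segment_symm])
      rw [norm_sub_rev y x, ← norm_neg]
      have e : -(u y - u x - L (y - x)) = u x - u y + 0 - L (x - y) := by
        simp only [map_sub]; abel
      rw [e]; exact this
    · exfalso
      have := hy h'
      have hb1 : b = 1 := by
        by_contra hne1
        have : 0 < a := by
          rcases ha.lt_or_eq with h3 | h3
          · exact h3
          · exact absurd (by linarith) hne1
        have := mul_pos this (sub_pos.mpr h)
        rw [h'] at h1
        linarith
      subst hb1
      simp at ha'
      subst ha'
      simp at h2
      linarith
    · exfalso
      have := conv_pos ha hb0 hab (sub_pos.mpr h) (sub_pos.mpr h')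
      linarith

lemma zc_zsmul (k : ℤ) (z : Fin 2 → ℤ) : zc (k • z) = (k : ℝ) • zc z := by
  ext i; simp [zc]

lemma latticePt_zsmul (A : Matrix (Fin 2) (Fin 2) ℝ) (k : ℤ) (z : Fin 2 → ℤ) :
    latticePt 2 A (k • z) = (k : ℝ) • latticePt 2 A z := by
  rw [latticePt_eq, latticePt_eq, zc_zsmul, Matrix.mulVec_smul]

lemma exists_up (A : Matrix (Fin 2) (Fin 2) ℝ) (hA : IsUnit A.det)
    (R : Finset (Vec 2)) (hRsym : ∀ ρ ∈ R, -ρ ∈ R)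
    (hRspan : ∀ x ∈ Lattice 2 A, ∃ c : Vec 2 → ℤ, x = ∑ ρ ∈ R, (c ρ : ℝ) • ρ) :
    ∃ ρ ∈ R, 0 < ρ 1 := by
  by_contra hcon
  push Not at hcon
  have h0 : ∀ ρ ∈ R, ρ 1 = 0 := by
    intro ρ hρ
    have := hcon _ (hRsym ρ hρ)
    simp at this
    exact le_antisymm (hcon ρ hρ) this
  have h1 : ∀ x ∈ Lattice 2 A, x 1 = 0 := by
    intro x hx
    obtain ⟨c, rfl⟩ := hRspan x hx
    rw [Finset.sum_apply]
    exact Finset.sum_eq_zero fun ρ hρ => by simp [h0 ρ hρ]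
  have a0 := h1 _ ⟨![1, 0], rfl⟩
  have a1 := h1 _ ⟨![0, 1], rfl⟩
  simp [latticePt] at a0 a1
  apply hA.ne_zero
  rw [Matrix.det_fin_two, a0, a1]; ring

lemma near_lattice (A : Matrix (Fin 2) (Fin 2) ℝ) (hA : IsUnit A.det) :
    ∃ M : ℝ, ∀ x : Vec 2, ∃ z, ‖latticePt 2 A z - x‖ ≤ M := by
  obtain ⟨M, hM, h, -⟩ := A_bounds A hA
  refine ⟨M, fun x => ⟨fun i => ⌊(A⁻¹.mulVec x) i⌋, ?_⟩⟩
  have hm : A⁻¹.mulVec x ∈ cell (fun i => ⌊(A⁻¹.mulVec x) i⌋) := (cell_mem _ _).mpr rfl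
  have hd := cell_dist _ _ hm
  have e : A.mulVec (A⁻¹.mulVec x) = x := by
    rw [Matrix.mulVec_mulVec, Matrix.mul_nonsing_inv _ hA, Matrix.one_mulVec]
  rw [norm_sub_rev]
  nth_rewrite 1 [← e]
  rw [latticePt_eq, ← Matrix.mulVec_sub]
  refine (h _).trans ?_
  nlinarith

lemma b_zero {N : ℕ} (A : Matrix (Fin 2) (Fin 2) ℝ) (hA : IsUnit A.det)
    (R : Finset (Vec 2)) (hRlat : ∀ ρ ∈ R, ρ ∈ Lattice 2 A) (hRsym : ∀ ρ ∈ R, -ρ ∈ R)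
    (hRspan : ∀ x ∈ Lattice 2 A, ∃ c : Vec 2 → ℤ, x = ∑ ρ ∈ R, (c ρ : ℝ) • ρ)
    (xhat : Vec 2) (Γ : Set (Vec 2))
    (hΓ : Γ = {x : Vec 2 | x 1 = xhat 1 ∧ xhat 0 ≤ x 0}) (bvec : Vec N)
    (u : Vec 2 → Vec N) (F : Vec 2 → Vec 2 →L[ℝ] Vec N)
    (hF : ∀ x : Vec 2, x ∉ Γ → HasFDerivAt u (F x) x)
    (hjump : ∀ x ∈ Γ, x ≠ xhat →
      ∃ uplus uminus : Vec N,
        Tendsto u (𝓝[{y : Vec 2 | xhat 1 < y 1}] x) (𝓝 uplus) ∧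
        Tendsto u (𝓝[{y : Vec 2 | y 1 < xhat 1}] x) (𝓝 uminus) ∧
        uplus - uminus = -bvec)
    (c : ℝ) (hc : 0 ≤ c) (hFd : ∀ x, x ≠ xhat → ‖F x‖ ≤ c * ‖x - xhat‖⁻¹)
    (hD : ∀ (z : Fin 2 → ℤ) (ρ : Vec 2), ρ ∈ R → latticePt 2 A z ≠ xhat → 
      ‖D1 ρ u (latticePt 2 A z)‖ ≤ c * ‖latticePt 2 A z - xhat‖⁻¹) : bvec = 0 := by
  obtain ⟨ρ, hρ, hρ1⟩ := exists_up A hA R hRsym hRspan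
  obtain ⟨zρ, hzρ⟩ := hRlat ρ hρ
  obtain ⟨M, hM⟩ := near_lattice A hA
  obtain ⟨K, hK⟩ := exists_nat_gt (M / ρ 1)
  rw [div_lt_iff₀ hρ1] at hK
  set W := M + K * ‖ρ‖ with hW
  have key : ∀ t : ℝ, W < t → ‖bvec‖ ≤ (c * (2 * K * ‖ρ‖ + 2 * K)) * (t - W)⁻¹ := by
    intro t ht
    obtain ⟨z, hz⟩ := hM (xhat + t • Pi.single 0 1)
    set q := latticePt 2 A z with hq
    set c0 : Vec 2 := xhat + t • Pi.single 0 1 with hc0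
    set x := q - (K : ℝ) • ρ with hx
    set y := q + (K : ℝ) • ρ with hy
    have h1 : |q 1 - xhat 1| ≤ M := by
      have := (norm_le_pi_norm (q - c0) 1).trans hz
      simpa [hc0] using this
    rw [abs_le] at h1
    have hx1 : x 1 < xhat 1 := by simp [hx]; linarith
    have hy1 : xhat 1 < y 1 := by simp [hy]; linarith
    have nK : ‖(K : ℝ) • ρ‖ = K * ‖ρ‖ := by rw [norm_smul]; simp
    have xb : x ∈ Metric.closedBall c0 W := by
      rw [mem_closedBall_iff_norm]
      have : x - c0 = (q - c0) - (K : ℝ) • ρ := by rw [hx]; abel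
      rw [this]
      refine (norm_sub_le _ _).trans ?_
      rw [nK]; linarith
    have yb : y ∈ Metric.closedBall c0 W := by
      rw [mem_closedBall_iff_norm]
      have : y - c0 = (q - c0) + (K : ℝ) • ρ := by rw [hy]; abel
      rw [this]
      refine (norm_add_le _ _).trans ?_
      rw [nK]; linarith
    have segb : segment ℝ x y ⊆ Metric.closedBall c0 W :=
      (convex_closedBall c0 W).segment_subset xb yb
    have far0 : ∀ p ∈ Metric.closedBall c0 W, t - W ≤ p 0 - xhat 0 := by
      intro p hp
      rw [mem_closedBall_iff_norm] at hp
      have := (norm_le_pi_norm (p - c0) 0).trans hp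
      simp only [hc0, Pi.sub_apply, Pi.add_apply, Pi.smul_apply, Pi.single_eq_same, smul_eq_mul, mul_one,
        Real.norm_eq_abs, abs_le] at this
      linarith
    have hpos : 0 < t - W := by linarith
    have far : ∀ p ∈ Metric.closedBall c0 W, t - W ≤ ‖p - xhat‖ := by
      intro p hp
      refine (far0 p hp).trans ?_
      have := norm_le_pi_norm (p - xhat) 0
      exact (le_abs_self _).trans this
    have hne : ∀ p ∈ Metric.closedBall c0 W, p ≠ xhat := by
      intro p hp h
      have := far p hp
      rw [h] at this; simp at this; linarith
    have finv : ∀ p ∈ Metric.closedBall c0 W, c * ‖p - xhat‖⁻¹ ≤ c * (t - W)⁻¹ := by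
      intro p hp
      have := far p hp
      gcongr
    -- crossing point
    set s := (xhat 1 - x 1) / (y 1 - x 1) with hs
    have hd : 0 < y 1 - x 1 := by linarith
    have s0 : 0 ≤ s := by rw [hs]; apply div_nonneg <;> linarith
    have s1 : s ≤ 1 := by rw [hs, div_le_one hd]; linarith
    have hp : (AffineMap.lineMap x y s : Vec 2) ∈ segment ℝ x y := by
      rw [segment_eq_image_lineMap]; exact ⟨s, ⟨s0, s1⟩, rfl⟩
    have hp1 : (AffineMap.lineMap x y s : Vec 2) 1 = xhat 1 := by
      simp only [AffineMap.lineMap_apply, vsub_eq_sub, vadd_eq_add, Pi.add_apply, Pi.smul_apply,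
        Pi.sub_apply, smul_eq_mul, hs]
      field_simp
      ring
    have hpΓ : (AffineMap.lineMap x y s : Vec 2) ∈ Γ := by
      rw [hΓ]
      exact ⟨hp1, by have := far0 _ (segb hp); linarith⟩
    have ce := cross_est xhat Γ hΓ bvec u F hF hjump x y _ 0 (c * (t - W)⁻¹) hx1 hy1 hp hpΓ (hne _ (segb hp))
      (fun p hp => by
        rw [sub_zero]
        exact (hFd p (hne p (segb hp))).trans (finv p (segb hp)))
    have yx : y - x = (2 * K : ℝ) • ρ := by rw [hx, hy, two_mul, add_smul]; abel
    have nyx : ‖y - x‖ = 2 * K * ‖ρ‖ := by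
      rw [yx, norm_smul, Real.norm_of_nonneg (by positivity)]
    rw [nyx] at ce
    simp only [ContinuousLinearMap.zero_apply, sub_zero] at ce
    -- telescoping
    have tel := Finset.sum_range_sub (fun k : ℕ => u (x + (k : ℝ) • ρ)) (2 * K)
    have yx' : x + ((2 * K : ℕ) : ℝ) • ρ = y := by push_cast; rw [← yx]; abel
    rw [yx'] at tel
    simp only [Nat.cast_zero, zero_smul, add_zero] at tel
    have hlat : ∀ k : ℕ, x + (k : ℝ) • ρ = latticePt 2 A (z + ((k : ℤ) - K) • zρ) := by
      intro k
      rw [latticePt_add, latticePt_zsmul, hzρ, hx]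
      push_cast
      rw [sub_smul]; abel
    have tb : ‖u y - u x‖ ≤ (2 * K) * (c * (t - W)⁻¹) := by
      rw [← tel]
      refine (norm_sum_le _ _).trans ?_
      have : ∀ k ∈ Finset.range (2 * K), ‖u (x + ((k + 1 : ℕ) : ℝ) • ρ) - u (x + (k : ℝ) • ρ)‖ ≤
          c * (t - W)⁻¹ := by
        intro k hk
        have hk' : (k : ℝ) ≤ 2 * K := by
          have := Finset.mem_range.mp hk
          exact_mod_cast this.le
        have hmem : x + (k : ℝ) • ρ ∈ Metric.closedBall c0 W := by
          by_cases hK0 : (K : ℝ) = 0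
          · have : (k : ℝ) = 0 := le_antisymm (by linarith) (Nat.cast_nonneg k)
            rw [this, zero_smul, add_zero]; exact xb
          apply segb
          rw [segment_eq_image_lineMap]
          have hKp : (0:ℝ) < 2 * K := by positivity
          refine ⟨k / (2 * K), ⟨by positivity, by rw [div_le_one hKp]; exact hk'⟩, ?_⟩
          rw [AffineMap.lineMap_apply, vsub_eq_sub, vadd_eq_add, yx, smul_smul, add_comm]
          congr 2
          field_simp
        have hDk := hD (z + ((k : ℤ) - K) • zρ) ρ hρ (by rw [← hlat]; exact hne _ hmem)
        rw [← hlat] at hDk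
        refine le_trans (le_of_eq ?_) (hDk.trans (finv _ hmem))
        unfold D1
        congr 3
        push_cast
        rw [add_smul, one_smul]; abel
      refine (Finset.sum_le_card_nsmul _ _ _ this).trans (le_of_eq ?_)
      rw [nsmul_eq_mul, Finset.card_range]; push_cast; ring
    have : bvec = (u y - u x + bvec) - (u y - u x) := by abel
    rw [this]
    refine (norm_sub_le _ _).trans ((add_le_add ce tb).trans (le_of_eq ?_))
    ring
  have lim : Tendsto (fun t : ℝ => (c * (2 * K * ‖ρ‖ + 2 * K)) * (t - W)⁻¹) atTop (𝓝 0) := by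
    have h1 : Tendsto (fun t : ℝ => (t - W)⁻¹) atTop (𝓝 0) :=
      tendsto_inv_atTop_zero.comp (tendsto_atTop_add_const_right _ (-W) tendsto_id)
    have := h1.const_mul (c * (2 * K * ‖ρ‖ + 2 * K))
    rwa [mul_zero] at this
  have : ‖bvec‖ ≤ 0 := ge_of_tendsto lim ((eventually_gt_atTop W).mono key)
  exact norm_le_zero_iff.mp this

/-- far-field expansion of the finite differences -/
lemma far_est {N : ℕ} (xhat : Vec 2) (Γ : Set (Vec 2))
    (hΓ : Γ = {x : Vec 2 | x 1 = xhat 1 ∧ xhat 0 ≤ x 0})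
    (u : Vec 2 → Vec N) (F : Vec 2 → Vec 2 →L[ℝ] Vec N)
    (hF : ∀ x : Vec 2, x ∉ Γ → HasFDerivAt u (F x) x)
    (hjump : ∀ x ∈ Γ, x ≠ xhat →
      ∃ uplus uminus : Vec N,
        Tendsto u (𝓝[{y : Vec 2 | xhat 1 < y 1}] x) (𝓝 uplus) ∧
        Tendsto u (𝓝[{y : Vec 2 | y 1 < xhat 1}] x) (𝓝 uminus) ∧
        uplus - uminus = -(0 : Vec N))
    (c : ℝ) (hc : 0 ≤ c) (dF : ∀ x, x ≠ xhat → DifferentiableAt ℝ F x)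
    (hFd : ∀ x, x ≠ xhat → ‖fderiv ℝ F x‖ ≤ c * ‖x - xhat‖⁻¹ ^ 2)
    (l ρ : Vec 2) (B : ℝ) (hB : ‖ρ‖ ≤ B) (hB1 : 1 ≤ B) (hl : 4 * (B + ‖xhat‖) ≤ ‖l‖)
    (h1 : l ∉ Γ) (h2 : l + ρ ∉ Γ) :
    ‖D1 ρ u l - F l ρ‖ ≤ 4 * c * B ^ 2 * ‖l‖⁻¹ ^ 2 := by
  have hxh := norm_nonneg xhat
  have hlp : 0 < ‖l‖ := by linarith
  have hd : B + ‖l‖ / 2 ≤ ‖l - xhat‖ := by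
    have := norm_sub_norm_le l xhat
    linarith
  have hsub : segment ℝ l (l + ρ) ⊆ Metric.closedBall l B :=
    (convex_closedBall l B).segment_subset (by simp; linarith) (by simpa using hB)
  have := diff_est xhat Γ hΓ u F hF hjump l (l + ρ) (F l) (c * (‖l‖ / 2)⁻¹ ^ 2 * B) h1 h2
    (fun p hp h => by
      have h3 := mem_closedBall_iff_norm.mp (hsub hp)
      rw [h, norm_sub_rev] at h3
      linarith)
    (fun p hp => by
      have h3 := mem_closedBall_iff_norm.mp (hsub hp)
      refine (lip_far xhat F c hc dF hFd l B (‖l‖ / 2) (by linarith) hd p h3).trans ?_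
      gcongr)
  rw [add_sub_cancel_left] at this
  unfold D1
  refine this.trans ?_
  calc c * (‖l‖ / 2)⁻¹ ^ 2 * B * ‖ρ‖ ≤ c * (‖l‖ / 2)⁻¹ ^ 2 * B * B := by gcongr
    _ = _ := by field_simp; ring

lemma taylor2 {E : Type*} [NormedAddCommGroup E] [NormedSpace ℝ E] (V : E → ℝ)
    (hV : ContDiff ℝ (3 : ℕ∞) V) (v : E) :
    ∃ K δ : ℝ, 0 ≤ K ∧ 0 < δ ∧ ∀ g : E, ‖g‖ < δ →
      |fderiv ℝ V g v - fderiv ℝ V 0 v - fderiv ℝ (fderiv ℝ V) 0 v g| ≤ K * ‖g‖ ^ 2 := by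
  have hV1 : ContDiff ℝ 2 (fderiv ℝ V) := hV.fderiv_right (by norm_cast)
  have hV2 : ContDiff ℝ 1 (fderiv ℝ (fderiv ℝ V)) := hV1.fderiv_right (by norm_cast)
  obtain ⟨K, t, ht, hL⟩ := (hV2.contDiffAt (x := 0)).exists_lipschitzOnWith
  obtain ⟨δ, hδ, hb⟩ := Metric.mem_nhds_iff.mp ht
  refine ⟨K * ‖v‖, δ, by positivity, hδ, fun g hg => ?_⟩
  have hsym : fderiv ℝ (fderiv ℝ V) 0 v g = fderiv ℝ (fderiv ℝ V) 0 g v := by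
    have := (hV.contDiffAt (x := 0)).isSymmSndFDerivAt (by simp; norm_cast)
    exact this v g
  have hd : Differentiable ℝ (fderiv ℝ V) := hV1.differentiable (by norm_num)
  have key := (convex_closedBall (0:E) ‖g‖).norm_image_sub_le_of_norm_hasFDerivWithin_le'
    (f := fderiv ℝ V) (f' := fderiv ℝ (fderiv ℝ V)) (C := K * ‖g‖) (φ := fderiv ℝ (fderiv ℝ V) 0)
    (x := 0) (y := g)
    (fun x _ => (hd x).hasFDerivAt.hasFDerivWithinAt)
    (fun x hx => by
      have hx' : ‖x‖ ≤ ‖g‖ := by simpa using hx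
      have := hL.dist_le_mul x (hb (by simpa using hx'.trans_lt hg)) 0 (hb (by simpa using hδ))
      rw [dist_eq_norm, dist_zero_right] at this
      exact this.trans (by gcongr))
    (by simp) (by simp)
  rw [sub_zero] at key
  rw [hsym]
  have := ContinuousLinearMap.le_opNorm (fderiv ℝ V g - fderiv ℝ V 0 - fderiv ℝ (fderiv ℝ V) 0 g) v
  simp only [sub_apply, Real.norm_eq_abs] at this
  refine this.trans ((mul_le_mul_of_nonneg_right key (norm_nonneg v)).trans (le_of_eq ?_))
  ring

/-- Component `i` of the linearised stress on the bond `ρ`. -/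
def Glin {d N : ℕ} (R : Finset (Vec d)) (V : ({x // x ∈ R} → Vec N) → ℝ) (i : Fin N) (ρ : Vec d) :
    ({x // x ∈ R} → Vec N) →L[ℝ] ℝ :=
  if h : ρ ∈ R then fderiv ℝ (fderiv ℝ V) 0 (Pi.single ⟨ρ, h⟩ (Pi.single i 1)) else 0

lemma Glin_apply {d N : ℕ} (R : Finset (Vec d)) (V : ({x // x ∈ R} → Vec N) → ℝ) (i : Fin N)
    (ρ : Vec d) (g : Vec d → Vec N) :
    Glin R V i ρ (fun σ => g σ) = ∑ σ ∈ R, ∑ j, CofV R V ρ σ i j * g σ j := by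
  by_cases h : ρ ∈ R
  swap
  · simp [Glin, CofV, h]
  have e : (fun σ : {x // x ∈ R} => g σ) =
      ∑ σ : {x // x ∈ R}, ∑ j : Fin N, g σ j • Pi.single σ (Pi.single j (1:ℝ)) := by
    ext τ k
    simp only [Finset.sum_apply, Pi.smul_apply, smul_eq_mul]
    rw [Finset.sum_eq_single τ]
    · rw [Finset.sum_eq_single k]
      · simp
      · intro b _ hb
        simp [Pi.single_apply, Ne.symm hb]
      · simp
    · intro b _ hb
      apply Finset.sum_eq_zero
      intro j _
      simp [Pi.single_eq_of_ne (Ne.symm hb)]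
    · simp
  rw [e, map_sum, ← Finset.sum_attach R]
  refine Finset.sum_congr rfl fun σ _ => ?_
  rw [map_sum]
  refine Finset.sum_congr rfl fun j _ => ?_
  rw [map_smul, smul_eq_mul, mul_comm]
  congr 1
  simp [Glin, CofV, h, iteratedFDeriv_two_apply]

/-- Restriction of a gradient to the stencil. -/
def restr {N : ℕ} (R : Finset (Vec 2)) : (Vec 2 →L[ℝ] Vec N) →L[ℝ] ({x // x ∈ R} → Vec N) :=
  ContinuousLinearMap.pi fun σ => ContinuousLinearMap.apply ℝ (Vec N) (σ : Vec 2)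

/-- Component of the Cauchy--Born stress as a linear functional of the gradient. -/
def CBlin {N : ℕ} (A : Matrix (Fin 2) (Fin 2) ℝ) (R : Finset (Vec 2))
    (C : Vec 2 → Vec 2 → Fin N → Fin N → ℝ) (i : Fin N) (a : Fin 2) :
    (Vec 2 →L[ℝ] Vec N) →L[ℝ] ℝ :=
  ∑ j : Fin N, ∑ bb : Fin 2, CB A R C i a j bb •
    ((ContinuousLinearMap.proj (R := ℝ) (φ := fun _ : Fin N => ℝ) j).comp
      (ContinuousLinearMap.apply ℝ (Vec N) (Pi.single bb (1:ℝ) : Vec 2)))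

lemma CBlin_apply {N : ℕ} (A : Matrix (Fin 2) (Fin 2) ℝ) (R : Finset (Vec 2))
    (C : Vec 2 → Vec 2 → Fin N → Fin N → ℝ) (i : Fin N) (a : Fin 2) (L : Vec 2 →L[ℝ] Vec N) :
    CBlin A R C i a L = ∑ j : Fin N, ∑ bb : Fin 2, CB A R C i a j bb * L (Pi.single bb 1) j := by
  simp [CBlin, ContinuousLinearMap.sum_apply]

lemma Glin_CB {N : ℕ} (A : Matrix (Fin 2) (Fin 2) ℝ) (hA : IsUnit A.det) (R : Finset (Vec 2))
    (V : ({x // x ∈ R} → Vec N) → ℝ) (i : Fin N) (a : Fin 2) (L : Vec 2 →L[ℝ] Vec N) :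
    ∑ ρ ∈ R, Glin R V i ρ (restr R L) * ρ a = |A.det| * CBlin A R (CofV R V) i a L := by
  have hd : |A.det| ≠ 0 := abs_ne_zero.mpr hA.ne_zero
  have hL : ∀ σ : Vec 2, ∀ j, L σ j = ∑ bb : Fin 2, σ bb * L (Pi.single bb 1) j := by
    intro σ j
    have : σ = ∑ bb : Fin 2, σ bb • (Pi.single bb (1:ℝ) : Vec 2) := by
      ext k; fin_cases k <;> simp [Fin.sum_univ_two]
    conv_lhs => rw [this]
    simp [map_sum, map_smul]
  have h1 : ∀ ρ ∈ R, Glin R V i ρ (restr R L) * ρ a =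
      ∑ σ ∈ R, ∑ j, ∑ bb : Fin 2, CofV R V ρ σ i j * ρ a * σ bb * L (Pi.single bb 1) j := by
    intro ρ _
    have := Glin_apply R V i ρ (fun σ => L σ)
    have e : restr R L = (fun σ : {x // x ∈ R} => L (σ : Vec 2)) := by
      ext; simp [restr]
    rw [e, this, Finset.sum_mul]
    refine Finset.sum_congr rfl fun σ _ => ?_
    rw [Finset.sum_mul]
    refine Finset.sum_congr rfl fun j _ => ?_
    rw [hL σ j, Finset.mul_sum, Finset.sum_mul]
    refine Finset.sum_congr rfl fun bb _ => ?_
    ring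
  rw [Finset.sum_congr rfl h1, CBlin_apply]
  have h2 : ∀ j : Fin N, ∀ bb : Fin 2, |A.det| * (CB A R (CofV R V) i a j bb * L (Pi.single bb 1) j) =
      ∑ ρ ∈ R, ∑ σ ∈ R, CofV R V ρ σ i j * ρ a * σ bb * L (Pi.single bb 1) j := by
    intro j bb
    rw [CB]
    rw [← mul_assoc, ← mul_assoc, mul_inv_cancel₀ hd, one_mul, Finset.sum_mul]
    refine Finset.sum_congr rfl fun ρ _ => ?_
    rw [Finset.sum_mul]
  rw [Finset.mul_sum]
  simp_rw [Finset.mul_sum, h2]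
  calc _ = ∑ ρ ∈ R, ∑ j, ∑ σ ∈ R, ∑ bb : Fin 2, CofV R V ρ σ i j * ρ a * σ bb * L (Pi.single bb 1) j :=
        Finset.sum_congr rfl fun ρ _ => Finset.sum_comm
    _ = ∑ j, ∑ ρ ∈ R, ∑ σ ∈ R, ∑ bb : Fin 2, CofV R V ρ σ i j * ρ a * σ bb * L (Pi.single bb 1) j :=
        Finset.sum_comm
    _ = _ := by
        refine Finset.sum_congr rfl fun j _ => ?_
        rw [Finset.sum_comm]
        rw [Finset.sum_comm (s := Finset.univ) (t := R)]
        rw [Finset.sum_comm]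
        refine Finset.sum_congr rfl fun σ _ => ?_
        rw [Finset.sum_comm]

lemma assemble {N : ℕ} (A : Matrix (Fin 2) (Fin 2) ℝ) (hA : IsUnit A.det)
    (R : Finset (Vec 2)) (hRlat : ∀ ρ ∈ R, ρ ∈ Lattice 2 A)
    (V : ({x // x ∈ R} → Vec N) → ℝ)
    (xhat : Vec 2) (Γ : Set (Vec 2))
    (hΓ : Γ = {x : Vec 2 | x 1 = xhat 1 ∧ xhat 0 ≤ x 0})
    (hΓlat : ∀ z : Fin 2 → ℤ, latticePt 2 A z ∉ Γ)
    (u : Vec 2 → Vec N) (F : Vec 2 → Vec 2 →L[ℝ] Vec N)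
    (hF : ∀ x : Vec 2, x ∉ Γ → HasFDerivAt u (F x) x)
    (hFsmooth : ContDiffOn ℝ (2 : ℕ∞) F {x : Vec 2 | x ≠ xhat})
    (hjump : ∀ x ∈ Γ, x ≠ xhat →
      ∃ uplus uminus : Vec N,
        Tendsto u (𝓝[{y : Vec 2 | xhat 1 < y 1}] x) (𝓝 uplus) ∧
        Tendsto u (𝓝[{y : Vec 2 | y 1 < xhat 1}] x) (𝓝 uminus) ∧
        uplus - uminus = -(0 : Vec N))
    (hPDE : ∀ x : Vec 2, x ≠ xhat → ∀ i : Fin N,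
      (∑ a : Fin 2, fderiv ℝ
          (fun y => ∑ j : Fin N, ∑ bb : Fin 2,
            CB A R (CofV R V) i a j bb * F y (Pi.single bb 1) j)
          x (Pi.single a 1)) = 0)
    (c : ℝ) (hc : 0 ≤ c) (hF0 : ∀ x, x ≠ xhat → ‖F x‖ ≤ c * ‖x - xhat‖⁻¹)
    (hF1 : ∀ x, x ≠ xhat → ‖fderiv ℝ F x‖ ≤ c * ‖x - xhat‖⁻¹ ^ 2)
    (i : Fin N) (w : Vec 2 → Vec 2 → ℝ) (K r₀ : ℝ) (hK : 0 ≤ K)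
    (hw : ∀ z, r₀ ≤ ‖latticePt 2 A z‖ → ∀ ρ ∈ R,
      |w ρ (latticePt 2 A z) - Glin R V i ρ (Dstencil R u (latticePt 2 A z))| ≤
      K * ‖latticePt 2 A z‖⁻¹ ^ 2)
    (f : Vec 2 → Vec N)
    (hf : ∀ l, f l i = ∑ ρ ∈ R, (w ρ (l - ρ) - w ρ l))
    (η : Vec 2 → ℝ) (hη : ContDiff ℝ (⊤ : ℕ∞) η)
    (h1 : ∀ x : Vec 2, enorm x ≤ 1 → η x = 1) (h0 : ∀ x : Vec 2, 2 ≤ enorm x → η x = 0) :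
    Tendsto (fun rad : ℝ => (∑' z : Fin 2 → ℤ, η (rad⁻¹ • latticePt 2 A z) • f (latticePt 2 A z)) i)
      atTop (𝓝 (-(∫ θ in (0 : ℝ)..(2 * Real.pi),
            ∑ a : Fin 2, ∑ j : Fin N, ∑ bb : Fin 2,
              CB A R (CofV R V) i a j bb *
                F (xhat + ![Real.cos θ, Real.sin θ]) (Pi.single bb 1) j *
                (![Real.cos θ, Real.sin θ] a)))) := by
  have hopen : IsOpen {x : Vec 2 | x ≠ xhat} := isOpen_ne
  have dF : ∀ x, x ≠ xhat → DifferentiableAt ℝ F x := fun x hx =>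
    (hFsmooth.contDiffAt (hopen.mem_nhds hx)).differentiableAt (by norm_num)
  have hsm : ∀ Φ : (Vec 2 →L[ℝ] Vec N) →L[ℝ] ℝ, ContDiffOn ℝ 1 (fun x => Φ (F x)) {x | x ≠ xhat} :=
    fun Φ => Φ.contDiff.comp_contDiffOn (hFsmooth.of_le (by norm_cast))
  have hfd : ∀ Φ : (Vec 2 →L[ℝ] Vec N) →L[ℝ] ℝ, ∀ x, x ≠ xhat →
      fderiv ℝ (fun x => Φ (F x)) x = Φ.comp (fderiv ℝ F x) :=
    fun Φ x hx => (Φ.hasFDerivAt.comp x (dF x hx).hasFDerivAt).fderiv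
  set B : ℝ := 1 + ∑ ρ ∈ R, ‖ρ‖ with hB
  have hB1 : 1 ≤ B := by
    have : 0 ≤ ∑ ρ ∈ R, ‖ρ‖ := Finset.sum_nonneg fun _ _ => norm_nonneg _
    linarith
  have hBρ : ∀ ρ ∈ R, ‖ρ‖ ≤ B := fun ρ hρ => by
    have := Finset.single_le_sum (f := fun ρ : Vec 2 => ‖ρ‖) (fun _ _ => norm_nonneg _) hρ
    linarith
  set S : ℝ := ‖CBlin A R (CofV R V) i 0‖ + ‖CBlin A R (CofV R V) i 1‖ +
    ∑ ρ ∈ R, ‖(Glin R V i ρ).comp (restr R)‖ with hS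
  have hSn : 0 ≤ ∑ ρ ∈ R, ‖(Glin R V i ρ).comp (restr R)‖ := by
    positivity
  have hS0 : ‖CBlin A R (CofV R V) i 0‖ ≤ S := by
    have := norm_nonneg (CBlin A R (CofV R V) i 1); linarith
  have hS1 : ‖CBlin A R (CofV R V) i 1‖ ≤ S := by
    have := norm_nonneg (CBlin A R (CofV R V) i 0); linarith
  have hSρ : ∀ ρ ∈ R, ‖(Glin R V i ρ).comp (restr R)‖ ≤ S := fun ρ hρ => by
    have := Finset.single_le_sum (f := fun ρ => ‖(Glin R V i ρ).comp (restr R)‖)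
      (fun _ _ => by positivity) hρ
    have := norm_nonneg (CBlin A R (CofV R V) i 0)
    have := norm_nonneg (CBlin A R (CofV R V) i 1)
    linarith
  have hSpos : 0 ≤ S := le_trans (by positivity) hS0
  have bnd : ∀ Φ : (Vec 2 →L[ℝ] Vec N) →L[ℝ] ℝ, ‖Φ‖ ≤ S → ∀ x, x ≠ xhat →
      |Φ (F x)| ≤ S * c * ‖x - xhat‖⁻¹ := by
    intro Φ hΦ x hx
    have := Φ.le_of_opNorm_le_of_le hΦ (hF0 x hx)
    rw [Real.norm_eq_abs] at this
    linarith
  have bnd' : ∀ Φ : (Vec 2 →L[ℝ] Vec N) →L[ℝ] ℝ, ‖Φ‖ ≤ S → ∀ x, x ≠ xhat →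
      ‖fderiv ℝ (fun x => Φ (F x)) x‖ ≤ S * c * ‖x - xhat‖⁻¹ ^ 2 := by
    intro Φ hΦ x hx
    rw [hfd Φ x hx, mul_assoc]
    exact (ContinuousLinearMap.opNorm_comp_le _ _).trans
      (mul_le_mul hΦ (hF1 x hx) (norm_nonneg _) hSpos)
  set T : ℝ := ∑ ρ ∈ R, ‖Glin R V i ρ‖ with hT
  have hT0 : 0 ≤ T := Finset.sum_nonneg fun _ _ => norm_nonneg _
  have hTρ : ∀ ρ ∈ R, ‖Glin R V i ρ‖ ≤ T := fun ρ hρ =>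
    Finset.single_le_sum (f := fun ρ => ‖Glin R V i ρ‖) (fun _ _ => norm_nonneg _) hρ
  have hadd : ∀ z, ∀ ρ ∈ R, latticePt 2 A z + ρ ∉ Γ := by
    intro z ρ hρ
    obtain ⟨z', rfl⟩ := hRlat ρ hρ
    rw [← latticePt_add]
    exact hΓlat _
  have main := main_scalar A hA R hRlat xhat (fun x => CBlin A R (CofV R V) i 0 (F x))
    (fun x => CBlin A R (CofV R V) i 1 (F x)) (S * c) (by positivity) (hsm _) (hsm _)
    (by
      intro x hx
      have := hPDE x hx i
      rw [Fin.sum_univ_two] at this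
      simp only [CBlin_apply]
      exact this)
    (bnd _ hS0) (bnd _ hS1) (bnd' _ hS0) (bnd' _ hS1)
    (fun ρ x => Glin R V i ρ (restr R (F x))) w
    (fun ρ hρ => bnd ((Glin R V i ρ).comp (restr R)) (hSρ ρ hρ))
    (fun x => Glin_CB A hA R V i 0 (F x)) (fun x => Glin_CB A hA R V i 1 (F x))
    (K + T * (4 * c * B ^ 2)) (max r₀ (4 * (B + ‖xhat‖))) (by positivity)
    (by
      intro z hz ρ hρ
      have hz1 := (le_max_left _ _).trans hz
      have hz2 := (le_max_right _ _).trans hz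
      have e1 := hw z hz1 ρ hρ
      have e2 : ‖Dstencil R u (latticePt 2 A z) - restr R (F (latticePt 2 A z))‖ ≤
          4 * c * B ^ 2 * ‖latticePt 2 A z‖⁻¹ ^ 2 := by
        rw [pi_norm_le_iff_of_nonneg (by positivity)]
        intro σ
        exact far_est xhat Γ hΓ u F hF hjump c hc dF hF1 _ σ B (hBρ σ σ.2) hB1 hz2 (hΓlat z)
          (hadd z σ σ.2)
      have e3 := (Glin R V i ρ).le_of_opNorm_le_of_le (hTρ ρ hρ) e2
      rw [map_sub, Real.norm_eq_abs] at e3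
      refine (abs_sub_le _ (Glin R V i ρ (Dstencil R u (latticePt 2 A z))) _).trans ?_
      linarith)
    η hη h1 h0
  have hint : (∫ θ in (0 : ℝ)..(2 * Real.pi),
            ∑ a : Fin 2, ∑ j : Fin N, ∑ bb : Fin 2,
              CB A R (CofV R V) i a j bb *
                F (xhat + ![Real.cos θ, Real.sin θ]) (Pi.single bb 1) j *
                (![Real.cos θ, Real.sin θ] a)) =
      ∫ θ in (0:ℝ)..(2 * Real.pi),
        (CBlin A R (CofV R V) i 0 (F (xhat + ![Real.cos θ, Real.sin θ])) * Real.cos θ +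
        CBlin A R (CofV R V) i 1 (F (xhat + ![Real.cos θ, Real.sin θ])) * Real.sin θ) := by
    congr 1
    ext θ
    rw [Fin.sum_univ_two, CBlin_apply, CBlin_apply, Finset.sum_mul, Finset.sum_mul]
    simp only [Finset.sum_mul]
    rfl
  rw [hint]
  refine main.congr' ?_
  filter_upwards [eventually_gt_atTop 0] with rad hrad
  obtain ⟨s, hs⟩ := finsupp_lat A hA (2 * rad)
    (fun z => η (rad⁻¹ • latticePt 2 A z) • f (latticePt 2 A z)) (by
      intro z hz
      rw [h0, zero_smul]
      refine le_trans ?_ (norm_le_enorm' _)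
      rw [norm_smul, norm_inv, Real.norm_of_nonneg hrad.le, ← div_eq_inv_mul, le_div_iff₀ hrad]
      exact hz.le)
  rw [tsum_eq_sum (s := s) hs, Finset.sum_apply, tsum_eq_sum (s := s)]
  · refine Finset.sum_congr rfl fun z _ => ?_
    rw [Pi.smul_apply, smul_eq_mul, hf]
  · intro z hz
    rw [← hf, ← smul_eq_mul, ← Pi.smul_apply]
    have := congrFun (hs z hz) i
    exact this

/-- Proposition: net force identity for CLE dislocation
fields. -/
theorem net_force_identity
    (N : ℕ)
    (A : Matrix (Fin 2) (Fin 2) ℝ) (hA : IsUnit A.det)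
    (R : Finset (Vec 2)) (hR0 : (0 : Vec 2) ∉ R)
    (hRlat : ∀ ρ ∈ R, ρ ∈ Lattice 2 A)
    (hRsym : ∀ ρ ∈ R, -ρ ∈ R)
    (hRspan : ∀ x ∈ Lattice 2 A, ∃ c : Vec 2 → ℤ, x = ∑ ρ ∈ R, (c ρ : ℝ) • ρ)
    (V : ({x // x ∈ R} → Vec N) → ℝ)
    (hV : ContDiff ℝ (3 : ℕ∞) V)
    (hVsym : PointSym R hRsym V)
    (xhat : Vec 2) (Γ : Set (Vec 2))
    (hΓ : Γ = {x : Vec 2 | x 1 = xhat 1 ∧ xhat 0 ≤ x 0})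
    (hΓlat : ∀ z : Fin 2 → ℤ, latticePt 2 A z ∉ Γ)
    (bvec : Vec N)
    (u : Vec 2 → Vec N) (F : Vec 2 → Vec 2 →L[ℝ] Vec N)
    (husmooth : ContDiffOn ℝ (3 : ℕ∞) u {x : Vec 2 | x ∉ Γ})
    (hF : ∀ x : Vec 2, x ∉ Γ → HasFDerivAt u (F x) x)
    (hFsmooth : ContDiffOn ℝ (2 : ℕ∞) F {x : Vec 2 | x ≠ xhat})
    (hjump : ∀ x ∈ Γ, x ≠ xhat →
      ∃ uplus uminus : Vec N,
        Tendsto u (𝓝[{y : Vec 2 | xhat 1 < y 1}] x) (𝓝 uplus) ∧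
        Tendsto u (𝓝[{y : Vec 2 | y 1 < xhat 1}] x) (𝓝 uminus) ∧
        uplus - uminus = -bvec)
    (hgradjump : ∀ x ∈ Γ, x ≠ xhat →
      ∃ w : Vec N,
        Tendsto (fun y => F y (Pi.single 1 1)) (𝓝[{y : Vec 2 | xhat 1 < y 1}] x) (𝓝 w) ∧
        Tendsto (fun y => F y (Pi.single 1 1)) (𝓝[{y : Vec 2 | y 1 < xhat 1}] x) (𝓝 w))
    (hPDE : ∀ x : Vec 2, x ≠ xhat → ∀ i : Fin N,
      (∑ a : Fin 2, fderiv ℝ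
          (fun y => ∑ j : Fin N, ∑ bb : Fin 2,
            CB A R (CofV R V) i a j bb * F y (Pi.single bb 1) j)
          x (Pi.single a 1)) = 0)
    (c : ℝ)
    (hdecay : ∀ j : ℕ, 1 ≤ j → j ≤ 3 → ∀ x : Vec 2, x ≠ xhat →
      ‖iteratedFDeriv ℝ (j - 1) F x‖ ≤ c * enorm (x - xhat) ^ (-(j : ℝ)))
    (hDdecay : ∀ (z : Fin 2 → ℤ) (ρ : Vec 2), ρ ∈ R →
      enorm (D1 ρ u (latticePt 2 A z)) ≤
        c * (1 + enorm (latticePt 2 A z - xhat))⁻¹) :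
    ∀ η : Vec 2 → ℝ, ContDiff ℝ (⊤ : ℕ∞) η →
      (∀ x, 0 ≤ η x ∧ η x ≤ 1) →
      (∀ x : Vec 2, enorm x ≤ 1 → η x = 1) →
      (∀ x : Vec 2, 2 ≤ enorm x → η x = 0) →
      Tendsto
        (fun rad : ℝ => ∑' z : Fin 2 → ℤ,
          η (rad⁻¹ • latticePt 2 A z) • deltaEpt R V u (latticePt 2 A z))
        atTop
        (𝓝 (fun i : Fin N =>
          -(∫ θ in (0 : ℝ)..(2 * Real.pi),
            ∑ a : Fin 2, ∑ j : Fin N, ∑ bb : Fin 2,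
              CB A R (CofV R V) i a j bb *
                F (xhat + ![Real.cos θ, Real.sin θ]) (Pi.single bb 1) j *
                (![Real.cos θ, Real.sin θ] a)))) ∧
      Tendsto
        (fun rad : ℝ => ∑' z : Fin 2 → ℤ,
          η (rad⁻¹ • latticePt 2 A z) • Hop 2 N R (CofV R V) u (latticePt 2 A z))
        atTop
        (𝓝 (fun i : Fin N =>
          -(∫ θ in (0 : ℝ)..(2 * Real.pi),
            ∑ a : Fin 2, ∑ j : Fin N, ∑ bb : Fin 2,
              CB A R (CofV R V) i a j bb *
                F (xhat + ![Real.cos θ, Real.sin θ]) (Pi.single bb 1) j *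
                (![Real.cos θ, Real.sin θ] a)))) := by
  intro η hη _ h1 h0
  have hxΓ : xhat ∈ Γ := by rw [hΓ]; exact ⟨rfl, le_refl _⟩
  have hlat : ∀ z, latticePt 2 A z ≠ xhat := fun z h => hΓlat z (h ▸ hxΓ)
  have hpos : ∀ x, x ≠ xhat → 0 < ‖x - xhat‖ := fun x hx => norm_pos_iff.mpr (sub_ne_zero.mpr hx)
  have hF0 : ∀ x, x ≠ xhat → ‖F x‖ ≤ |c| * ‖x - xhat‖⁻¹ := by
    intro x hx
    have h := hdecay 1 le_rfl (by norm_num) x hx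
    have hp := hpos x hx
    have hle := norm_le_enorm' (x - xhat)
    rw [show 1 - 1 = 0 from rfl, norm_iteratedFDeriv_zero, Nat.cast_one, Real.rpow_neg_one] at h
    refine h.trans ?_
    have hi : (enorm (x - xhat))⁻¹ ≤ ‖x - xhat‖⁻¹ := inv_anti₀ hp hle
    have hi0 : 0 ≤ (enorm (x - xhat))⁻¹ := inv_nonneg.mpr (hp.le.trans hle)
    exact (mul_le_mul_of_nonneg_right (le_abs_self c) hi0).trans
      (mul_le_mul_of_nonneg_left hi (abs_nonneg c))
  have hF1 : ∀ x, x ≠ xhat → ‖fderiv ℝ F x‖ ≤ |c| * ‖x - xhat‖⁻¹ ^ 2 := by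
    intro x hx
    have h := hdecay 2 (by norm_num) (by norm_num) x hx
    have hp := hpos x hx
    have hle := norm_le_enorm' (x - xhat)
    have h2 : enorm (x - xhat) ^ (-((2 : ℕ) : ℝ)) = (enorm (x - xhat))⁻¹ ^ 2 := by
      rw [Real.rpow_neg (hp.le.trans hle), Real.rpow_natCast, inv_pow]
    rw [h2, show 2 - 1 = 1 from rfl, norm_iteratedFDeriv_one] at h
    refine h.trans ?_
    have hi : (enorm (x - xhat))⁻¹ ≤ ‖x - xhat‖⁻¹ := inv_anti₀ hp hle
    have hi0 : 0 ≤ (enorm (x - xhat))⁻¹ := inv_nonneg.mpr (hp.le.trans hle)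
    exact (mul_le_mul_of_nonneg_right (le_abs_self c) (by positivity)).trans
      (mul_le_mul_of_nonneg_left (pow_le_pow_left₀ hi0 hi 2) (abs_nonneg c))
  have hD : ∀ (z : Fin 2 → ℤ) (ρ : Vec 2), ρ ∈ R → 
      ‖D1 ρ u (latticePt 2 A z)‖ ≤ |c| * ‖latticePt 2 A z - xhat‖⁻¹ := by
    intro z ρ hρ
    have hp := hpos _ (hlat z)
    have hle := norm_le_enorm' (latticePt 2 A z - xhat)
    have hi : (1 + enorm (latticePt 2 A z - xhat))⁻¹ ≤ ‖latticePt 2 A z - xhat‖⁻¹ :=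
      inv_anti₀ hp (by linarith)
    have hi0 : 0 ≤ (1 + enorm (latticePt 2 A z - xhat))⁻¹ := inv_nonneg.mpr (by linarith)
    exact ((norm_le_enorm' _).trans (hDdecay z ρ hρ)).trans
      ((mul_le_mul_of_nonneg_right (le_abs_self c) hi0).trans
      (mul_le_mul_of_nonneg_left hi (abs_nonneg c)))
  have hb := b_zero A hA R hRlat hRsym hRspan xhat Γ hΓ bvec u F hF hjump |c| (abs_nonneg c) hF0
    (fun z ρ hρ _ => hD z ρ hρ)
  subst hb
  have asm := assemble A hA R hRlat V xhat Γ hΓ hΓlat u F hF hFsmooth hjump hPDE |c| (abs_nonneg c)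
    hF0 hF1
  constructor
  · rw [tendsto_pi_nhds]
    intro i
    -- Taylor expansion of the bond forces
    have hT : ∀ ρ : Vec 2, ∃ K δ : ℝ, 0 ≤ K ∧ 0 < δ ∧ ∀ h : ρ ∈ R, ∀ g, ‖g‖ < δ →
        |gradV R V ⟨ρ, h⟩ g i - gradV R V ⟨ρ, h⟩ 0 i - Glin R V i ρ g| ≤ K * ‖g‖ ^ 2 := by
      intro ρ
      by_cases h : ρ ∈ R
      · obtain ⟨K, δ, hK, hδ, hb⟩ := taylor2 V hV (Pi.single ⟨ρ, h⟩ (Pi.single i 1))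
        refine ⟨K, δ, hK, hδ, fun _ g hg => ?_⟩
        have := hb g hg
        simpa only [gradV, Glin, dif_pos h] using this
      · exact ⟨0, 1, le_rfl, one_pos, fun h' => absurd h' h⟩
    choose Kf δf hKf hδf hTf using hT
    obtain ⟨δ, hδ, hδle⟩ : ∃ δ : ℝ, 0 < δ ∧ ∀ ρ ∈ R, δ ≤ δf ρ := by
      rcases R.eq_empty_or_nonempty with h | h
      · exact ⟨1, one_pos, by simp [h]⟩
      · obtain ⟨m, _, hm⟩ := R.exists_min_image δf h
        exact ⟨δf m, hδf m, hm⟩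
    have hKs : ∀ ρ ∈ R, Kf ρ ≤ ∑ ρ ∈ R, Kf ρ := fun ρ hρ =>
      Finset.single_le_sum (f := Kf) (fun σ _ => hKf σ) hρ
    have hKs0 : 0 ≤ ∑ ρ ∈ R, Kf ρ := Finset.sum_nonneg fun σ _ => hKf σ
    refine asm i (fun ρ l => if h : ρ ∈ R then gradV R V ⟨ρ, h⟩ (Dstencil R u l) i -
        gradV R V ⟨ρ, h⟩ 0 i else 0) ((∑ ρ ∈ R, Kf ρ) * (2 * |c|) ^ 2)
        (2 * ‖xhat‖ + 1 + 2 * |c| * δ⁻¹ + 1) (by positivity) ?_ _ ?_ η hη h1 h0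
    · intro z hz ρ hρ
      simp only [dif_pos hρ]
      set l := latticePt 2 A z with hl
      have hδi : 0 ≤ 2 * |c| * δ⁻¹ := by positivity
      have hlp : 0 < ‖l‖ := by have := norm_nonneg xhat; linarith
      have hg : ‖Dstencil R u l‖ ≤ 2 * |c| * ‖l‖⁻¹ := by
        rw [pi_norm_le_iff_of_nonneg (by positivity)]
        intro σ
        refine (hD z σ σ.2).trans ?_
        have h3 : ‖l‖ / 2 ≤ ‖l - xhat‖ := by
          have := norm_sub_norm_le l xhat
          linarith
        have h4 := inv_anti₀ (by positivity) h3
        have h5 : (‖l‖ / 2)⁻¹ = 2 * ‖l‖⁻¹ := by rw [inv_div]; ring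
        rw [h5] at h4
        have := mul_le_mul_of_nonneg_left h4 (abs_nonneg c)
        linarith
      have hgδ : ‖Dstencil R u l‖ < δ := by
        refine hg.trans_lt ?_
        rw [← div_eq_mul_inv, div_lt_iff₀ hlp]
        have h6 : 2 * |c| * δ⁻¹ < ‖l‖ := by have := norm_nonneg xhat; linarith
        rw [← div_eq_mul_inv, div_lt_iff₀ hδ] at h6
        linarith
      refine (hTf ρ hρ _ (hgδ.trans_le (hδle ρ hρ))).trans ?_
      rw [mul_assoc, ← mul_pow]
      exact mul_le_mul (hKs ρ hρ) (pow_le_pow_left₀ (norm_nonneg _) hg 2) (by positivity) hKs0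
    · intro l
      rw [← Finset.sum_attach R]
      simp only [deltaEpt, Finset.sum_apply, Pi.sub_apply]
      refine Finset.sum_congr rfl fun ρ _ => ?_
      simp only [dif_pos ρ.2]
      ring
  · rw [tendsto_pi_nhds]
    intro i
    refine asm i (fun ρ l => Glin R V i ρ (Dstencil R u l)) 0 0 le_rfl ?_ _ ?_ η hη h1 h0
    · intro z _ ρ _
      simp
    · intro l
      have e : ∀ (ρ m : Vec 2), Glin R V i ρ (Dstencil R u m) =
          ∑ σ ∈ R, (mulV (CofV R V ρ σ) (D1 σ u m)) i := fun ρ m =>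
        Glin_apply R V i ρ (fun σ => D1 σ u m)
      simp only [e, Hop, Finset.sum_apply, Pi.sub_apply, Finset.sum_sub_distrib]

end Defect
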